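/- Let (Ω, 𝓕, 𝔽, P) satisfy the usual conditions, 0 < L < U, η progressively measurable with L ≤ η ≤ U (P ⊗ dt)-a.e., and λ : [0,∞) × ℕ → [0,∞) measurable with L ≤ λ(·, x) ≤ U Lebesgue-a.e. for each x ∈ ℕ. Suppose X and X′ are two counting processes on Ω (with jump times (τ_k) and (τ′_k) respectively, and associated filtrations 𝔾^k, 𝔾 and 𝔾′^k, 𝔾′ built as right-continuous regularizations of 𝔽 joined with the natural filtrations of the jump-time indicator processes) such that each of X and X′ satisfies: (i) the immersion chain 𝔽 ↪ 𝔾^1 ↪ ⋯ ↪ 𝔾^k ↪ ⋯ ↪ 𝔾 (resp. with primes); (ii) for each k ≥ 1 the process t ↦ P(τ_k > t | 𝓖^{k-1}_t) (resp. with primes) has a continuous strictly positive modification; and (iii) X_t − ∫_0^t (η_s / E[η_s | X_{s−}]) λ(s, X_{s−}) ds is a 𝔾-martingale (resp. with primes). Then X and X′ have the same law: for every n ≥ 1 and all times 0 ≤ t_1 < ⋯ < t_n, the joint distributions of (X_{t_1}, …, X_{t_n}) and (X′_{t_1}, …, X′_{t_n}) coincide. -/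

import Mathlib

open MeasureTheory ProbabilityTheory Filter Set
open scoped ENNReal Topology

noncomputable section

namespace InvMarkovJump

variable {Ω : Type*}

/-- `F` is a filtration (for times `t ≥ 0`) of sub-σ-algebras of `m0`. -/
def IsFiltration (m0 : MeasurableSpace Ω) (F : ℝ → MeasurableSpace Ω) : Prop :=
  (∀ s t : ℝ, 0 ≤ s → s ≤ t → F s ≤ F t) ∧ ∀ t : ℝ, F t ≤ m0

/-- The right-continuous regularization `(⋂_{s > t} F s)_{t ≥ 0}` of a filtration. -/
def rcReg (F : ℝ → MeasurableSpace Ω) : ℝ → MeasurableSpace Ω :=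
  fun t => ⨅ s ∈ Set.Ioi t, F s

/-- All sample paths of `M` are right-continuous (at every time `t ≥ 0`). -/
def RCPaths (M : ℝ → Ω → ℝ) : Prop :=
  ∀ ω, ∀ t : ℝ, 0 ≤ t → ContinuousWithinAt (fun s => M s ω) (Set.Ici t) t

/-- `M` is a martingale (for times `t ≥ 0`) with respect to the filtration `F`
under the measure `μ`: it is adapted, integrable, and `E[M_t | F_s] = M_s` a.s.
for all `0 ≤ s ≤ t`. -/
def IsMartingale {m0 : MeasurableSpace Ω} (μ : Measure Ω)
    (F : ℝ → MeasurableSpace Ω) (M : ℝ → Ω → ℝ) : Prop :=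
  (∀ t : ℝ, 0 ≤ t → Integrable (M t) μ) ∧
  (∀ t : ℝ, 0 ≤ t → Measurable[F t] (M t)) ∧
  ∀ s t : ℝ, 0 ≤ s → s ≤ t → μ[M t|F s] =ᵐ[μ] M s

/-- `F` is immersed in `G`: `F ⊆ G` and every `F`-martingale (with right-continuous
sample paths) is a `G`-martingale. -/
def Immersed {m0 : MeasurableSpace Ω} (μ : Measure Ω)
    (F G : ℝ → MeasurableSpace Ω) : Prop :=
  (∀ t : ℝ, 0 ≤ t → F t ≤ G t) ∧
  ∀ M : ℝ → Ω → ℝ, RCPaths M → IsMartingale μ F M → IsMartingale μ G M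

/-- The usual conditions: the filtration is right-continuous and `F 0` contains
all `μ`-null sets. -/
def UsualConditions {m0 : MeasurableSpace Ω} (μ : Measure Ω)
    (F : ℝ → MeasurableSpace Ω) : Prop :=
  IsFiltration m0 F ∧ (∀ t : ℝ, 0 ≤ t → F t = rcReg F t) ∧
    ∀ s : Set Ω, μ s = 0 → MeasurableSet[F 0] s

/-- `E` is `Exp(1)`-distributed: `P(E > x) = e^{-x}` for all `x ≥ 0`. -/
def IsExpOne {m0 : MeasurableSpace Ω} (μ : Measure Ω) (E : Ω → ℝ) : Prop :=
  Measurable E ∧ ∀ x : ℝ, 0 ≤ x → μ {ω | x < E ω} = ENNReal.ofReal (Real.exp (-x))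

/-- `F_∞ = ⋁_{t ≥ 0} F t`. -/
def Finfty (F : ℝ → MeasurableSpace Ω) : MeasurableSpace Ω :=
  ⨆ t ∈ Set.Ici (0:ℝ), F t

/-- The natural filtration `(σ(Y_s : 0 ≤ s ≤ t))_{t ≥ 0}` of a process `Y`. -/
def natFilt {β : Type*} [MeasurableSpace β] (Y : ℝ → Ω → β) : ℝ → MeasurableSpace Ω :=
  fun t => ⨆ s ∈ Set.Icc (0:ℝ) t, MeasurableSpace.comap (Y s) inferInstance

/-- Progressive measurability of a process `u` with respect to the filtration `F`:
for every `t ≥ 0`, `(s, ω) ↦ u s ω` on `[0, t] × Ω` is `B([0,t]) ⊗ F t`-measurable. -/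
def ProgMeas (F : ℝ → MeasurableSpace Ω) (u : ℝ → Ω → ℝ) : Prop :=
  ∀ t : ℝ, 0 ≤ t →
    Measurable[MeasurableSpace.prod inferInstance (F t)]
      (fun p : Set.Icc (0:ℝ) t × Ω => u p.1 p.2)

/-- `X_t = #{k ≥ 1 : τ_k ≤ t}`. -/
def countX (τ : ℕ → Ω → ℝ) (t : ℝ) (ω : Ω) : ℕ :=
  Nat.card {k : ℕ // τ (k + 1) ω ≤ t}

/-- `X_{t-} = #{k ≥ 1 : τ_k < t}`. -/
def countXminus (τ : ℕ → Ω → ℝ) (t : ℝ) (ω : Ω) : ℕ :=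
  Nat.card {k : ℕ // τ (k + 1) ω < t}

/-- The filtration `G^k = F ∇ (A^1 ∇ ⋯ ∇ A^k)`, where `A^i` is the natural filtration of the
indicator process of the `i`-th jump time. -/
def jumpFilt (F : ℝ → MeasurableSpace Ω) (τ : ℕ → Ω → ℝ)
    (k : ℕ) : ℝ → MeasurableSpace Ω :=
  rcReg (fun t => F t ⊔
    ⨆ i ∈ Finset.range k, natFilt (fun s ω => if τ (i + 1) ω ≤ s then (1:ℝ) else 0) t)

/-- The filtration `G = F ∇ (∇_{i=1}^∞ A^i)`. -/
def jumpFiltInf (F : ℝ → MeasurableSpace Ω) (τ : ℕ → Ω → ℝ) :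
    ℝ → MeasurableSpace Ω :=
  rcReg (fun t => F t ⊔
    ⨆ i : ℕ, natFilt (fun s ω => if τ (i + 1) ω ≤ s then (1:ℝ) else 0) t)

/-- The hypotheses of the uniqueness theorem for a counting process with jump times `τ`:
the immersion chain (i), the regularity (ii) of the Azéma supermartingales, and the
martingale property of the compensated counting process. -/
def InversionSetting {m0 : MeasurableSpace Ω} (μ : Measure Ω)
    (F : ℝ → MeasurableSpace Ω) (η : ℝ → Ω → ℝ) (lam : ℝ → ℕ → ℝ)
    (τ : ℕ → Ω → ℝ) : Prop :=
  (∀ ω, τ 0 ω = 0) ∧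
  (∀ᵐ ω ∂μ, (0 < τ 1 ω) ∧ StrictMono (fun k => τ k ω) ∧
    Tendsto (fun k => τ k ω) atTop atTop) ∧
  (∀ k : ℕ, Immersed μ (jumpFilt F τ k) (jumpFilt F τ (k + 1))) ∧
  (∀ k : ℕ, Immersed μ (jumpFilt F τ k) (jumpFiltInf F τ)) ∧
  (∀ k : ℕ, ∃ Z : ℝ → Ω → ℝ,
    (∀ ω, Continuous fun t => Z t ω) ∧ (∀ t ω, 0 < Z t ω) ∧
    ∀ t : ℝ, 0 ≤ t →
      Z t =ᵐ[μ] μ[(fun ω => if t < τ (k + 1) ω then (1:ℝ) else 0) | jumpFilt F τ k t]) ∧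
  IsMartingale μ (jumpFiltInf F τ) (fun t ω =>
    (countX τ t ω : ℝ) -
      ∫ s in Set.Ioc 0 t,
        η s ω /
          (μ[η s | MeasurableSpace.comap (countXminus τ s) inferInstance]) ω *
          lam s (countXminus τ s ω))

/-!
Condition the counting process on the information `F T` together with the first `k` jump times.
Along the immersion chain, the continuous Azéma supermartingale of `τ (k + 1)` with respect to
`jumpFilt F τ k` forces the compensated jump to have mean zero also when tested against variables
measurable at the horizon `T`, not merely against the past. On the state `X = k` the denominator
`E[η | X = k]` is a ratio of two integrals against the law of the history `(F T, τ 1, …, τ k)`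
restricted to the survival of the state. This restricted law therefore solves a closed evolution
equation whose right-hand side is Lipschitz in total variation, as `η` lies between `L` and `U`;
iterating the resulting Gronwall estimate shows that the solution is unique. So the law of the first
`k` jump times jointly with `F T` determines that of the first `k + 1`, and induction on `k` gives
the joint law of all jump times up to `T`, hence of the counts.
-/

/-- The nonnegative dyadic rationals `j / 2 ^ n`, along which paths are sampled to form right
limits. -/
def dyadics : Set ℝ := Set.range fun p : ℕ × ℕ => (p.1 : ℝ) / 2 ^ p.2

lemma countable_dyadics : dyadics.Countable := Set.countable_range _

lemma exists_eq_div_two_pow_of_mem_dyadics {q : ℝ} (hq : q ∈ dyadics) :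
    ∃ n₀ : ℕ, ∀ n ≥ n₀, ∃ j : ℕ, q = (j : ℝ) / 2 ^ n := by
  obtain ⟨⟨j, m⟩, rfl⟩ := hq
  refine ⟨m, fun n hn => ⟨j * 2 ^ (n - m), ?_⟩⟩
  obtain ⟨d, rfl⟩ := Nat.exists_eq_add_of_le hn
  simp only [Nat.add_sub_cancel_left, pow_add]
  push_cast
  field_simp

/-- The filter of dyadic rationals decreasing strictly to `t`. -/
def dyadicRight (t : ℝ) : Filter ℝ := 𝓝[dyadics ∩ Ioi t] t

/-- The smallest dyadic rational of level `n` strictly above `t ≥ 0`. -/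
def dyadicCeil (t : ℝ) (n : ℕ) : ℝ := ((⌊t * 2 ^ n⌋₊ + 1 : ℕ) : ℝ) / 2 ^ n

lemma dyadicCeil_mem_dyadics (t : ℝ) (n : ℕ) : dyadicCeil t n ∈ dyadics := ⟨(_, n), rfl⟩

lemma lt_dyadicCeil (t : ℝ) (n : ℕ) : t < dyadicCeil t n := by
  rw [dyadicCeil, lt_div_iff₀ (by positivity)]
  push_cast
  exact Nat.lt_floor_add_one _

lemma dyadicCeil_le {t : ℝ} (ht : 0 ≤ t) (n : ℕ) : dyadicCeil t n ≤ t + (1 / 2) ^ n := by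
  rw [dyadicCeil, div_le_iff₀ (by positivity), add_mul, ← mul_pow]
  push_cast
  norm_num
  exact Nat.floor_le (by positivity)

lemma tendsto_dyadicCeil {t : ℝ} (ht : 0 ≤ t) :
    Tendsto (dyadicCeil t) atTop (dyadicRight t) := by
  refine tendsto_nhdsWithin_iff.2
    ⟨?_, Eventually.of_forall fun n => ⟨dyadicCeil_mem_dyadics t n, lt_dyadicCeil t n⟩⟩
  have hlim : Tendsto (fun n : ℕ => t + (1 / 2 : ℝ) ^ n) atTop (𝓝 t) := by
    simpa using tendsto_const_nhds.add
      (tendsto_pow_atTop_nhds_zero_of_lt_one (r := (1 / 2 : ℝ)) (by norm_num) (by norm_num))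
  exact tendsto_of_tendsto_of_tendsto_of_le_of_le tendsto_const_nhds hlim
    (fun n => (lt_dyadicCeil t n).le) (dyadicCeil_le ht)

lemma dyadicRight_neBot {t : ℝ} (ht : 0 ≤ t) : (dyadicRight t).NeBot :=
  (tendsto_dyadicCeil ht).neBot

lemma eventually_dyadicRight_mem_Ioo {t r : ℝ} (htr : t < r) :
    ∀ᶠ q in dyadicRight t, q ∈ dyadics ∩ Ioo t r := by
  filter_upwards [mem_nhdsWithin_of_mem_nhds (Iio_mem_nhds htr), self_mem_nhdsWithin] with q hqr hq
  exact ⟨hq.1, hq.2, hqr⟩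

lemma continuousWithinAt_Ici_of_tendsto_dyadicRight {f g : ℝ → ℝ}
    (h : ∀ t, 0 ≤ t → Tendsto f (dyadicRight t) (𝓝 (g t))) {t : ℝ} (ht : 0 ≤ t) :
    ContinuousWithinAt g (Ici t) t := by
  rw [Metric.continuousWithinAt_iff]
  intro ε hε
  obtain ⟨δ, hδ, hball⟩ := Metric.mem_nhdsWithin_iff.1
    (Metric.tendsto_nhds.1 (h t ht) (ε / 2) (half_pos hε))
  refine ⟨δ, hδ, fun s (hts : t ≤ s) hst => ?_⟩
  rw [Real.dist_eq, abs_of_nonneg (sub_nonneg.2 hts)] at hst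
  have := dyadicRight_neBot (ht.trans hts)
  have hclose : ∀ᶠ q in dyadicRight s, dist (f q) (g t) ≤ ε / 2 := by
    filter_upwards [eventually_dyadicRight_mem_Ioo (show s < t + δ by linarith)] with q hq
    refine (hball ⟨?_, hq.1, hts.trans_lt hq.2.1⟩).le
    rw [Metric.mem_ball, Real.dist_eq, abs_of_nonneg (by linarith [hq.2.1])]
    linarith [hq.2.2]
  have := le_of_tendsto ((h s (ht.trans hts)).dist tendsto_const_nhds) hclose
  linarith

/-- The process `M` sampled along the dyadic grid of level `n`. -/
def dyadicSample (M : ℝ → Ω → ℝ) (n : ℕ) : ℕ → Ω → ℝ := fun j => M ((j : ℝ) / 2 ^ n)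

lemma exists_le_upcrossingsBefore_dyadicSample {M : ℝ → Ω → ℝ} {ω : Ω} {a b t : ℝ} (ht : 0 ≤ t)
    (hab : a < b) (ha : ∃ᶠ q in dyadicRight t, M q ω < a)
    (hb : ∃ᶠ q in dyadicRight t, b < M q ω) (m : ℕ) :
    ∀ r > t, ∃ n₀ : ℕ, ∀ n ≥ n₀, ∃ N : ℕ, (N : ℝ) / 2 ^ n ≤ r ∧
      m ≤ upcrossingsBefore a b (dyadicSample M n) N ω := by
  induction m with
  | zero => exact fun r hr => ⟨0, fun n _ => ⟨0, by simpa using (ht.trans hr.le), Nat.zero_le _⟩⟩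
  | succ m ih =>
    intro r hr
    obtain ⟨q₂, hbq₂, hq₂, htq₂, hq₂r⟩ :=
      (hb.and_eventually (eventually_dyadicRight_mem_Ioo hr)).exists
    obtain ⟨q₁, haq₁, hq₁, htq₁, hq₁₂⟩ :=
      (ha.and_eventually (eventually_dyadicRight_mem_Ioo htq₂)).exists
    obtain ⟨n₀, hn₀⟩ := ih q₁ htq₁
    obtain ⟨n₁, hn₁⟩ := exists_eq_div_two_pow_of_mem_dyadics hq₁
    obtain ⟨n₂, hn₂⟩ := exists_eq_div_two_pow_of_mem_dyadics hq₂
    obtain ⟨n₃, hn₃⟩ := exists_pow_lt_of_lt_one (sub_pos.2 hq₂r) (show (1 / 2 : ℝ) < 1 by norm_num)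
    refine ⟨max (max n₀ n₁) (max n₂ n₃), fun n hn => ?_⟩
    simp only [ge_iff_le, max_le_iff] at hn
    obtain ⟨⟨hn₀', hn₁'⟩, hn₂', hn₃'⟩ := hn
    obtain ⟨N, hN, hmN⟩ := hn₀ n hn₀'
    obtain ⟨j₁, rfl⟩ := hn₁ n hn₁'
    obtain ⟨j₂, rfl⟩ := hn₂ n hn₂'
    have h2n : (0 : ℝ) < 2 ^ n := by positivity
    have hNj₁ : N ≤ j₁ := mod_cast (div_le_div_iff_of_pos_right h2n).1 hN
    have hj₁₂ : j₁ ≤ j₂ := mod_cast ((div_lt_div_iff_of_pos_right h2n).1 hq₁₂).le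
    refine ⟨j₂ + 1, ?_, hmN.trans_lt
      (upcrossingsBefore_lt_of_exists_upcrossing hab hNj₁ haq₁ hj₁₂ hbq₂)⟩
    have hmesh : (1 : ℝ) / 2 ^ n ≤ (1 / 2) ^ n₃ := by
      rw [← one_div_pow]
      exact pow_le_pow_of_le_one (by norm_num) (by norm_num) hn₃'
    push_cast
    rw [add_div]
    linarith

lemma exists_tendsto_dyadicRight {M : ℝ → Ω → ℝ} {ω : Ω} {K : ℝ}
    (hK : ∀ q ∈ dyadics, |M q ω| ≤ K)
    (hup : ∀ a b : ℚ, a < b →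
      liminf (fun n => upcrossings (a : ℝ) (b : ℝ) (dyadicSample M n) ω) atTop < ∞)
    {t : ℝ} (ht : 0 ≤ t) :
    ∃ c, Tendsto (fun q => M q ω) (dyadicRight t) (𝓝 c) := by
  have hbdd : ∀ᶠ q in dyadicRight t, |M q ω| ≤ K := by
    filter_upwards [self_mem_nhdsWithin] with q hq using hK q hq.1
  refine tendsto_of_no_upcrossings (s := Set.range ((↑) : ℚ → ℝ)) Rat.denseRange_cast ?_
    ⟨K, eventually_map.2 (hbdd.mono fun q hq => (abs_le.1 hq).2)⟩
    ⟨-K, eventually_map.2 (hbdd.mono fun q hq => (abs_le.1 hq).1)⟩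
  rintro _ ⟨a, rfl⟩ _ ⟨b, rfl⟩ hab ⟨ha, hb⟩
  obtain ⟨m, hm⟩ := ENNReal.exists_nat_gt (hup a b (mod_cast hab)).ne
  obtain ⟨n₀, hn₀⟩ := exists_le_upcrossingsBefore_dyadicSample ht hab ha hb m (t + 1) (by linarith)
  obtain ⟨n, hn, hn₀n⟩ := ((frequently_lt_of_liminf_lt (by isBoundedDefault) hm).and_eventually
    (eventually_ge_atTop n₀)).exists
  obtain ⟨N, -, hN⟩ := hn₀ n hn₀n
  refine hn.not_ge (le_trans (mod_cast hN) (le_iSup (fun N =>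
    (upcrossingsBefore (a : ℝ) (b : ℝ) (dyadicSample M n) N ω : ℝ≥0∞)) N))

/-- The right limits of `M` along the dyadic rationals, set to zero off the event `S` on which
these limits are known to exist. -/
def dyadicRegularization (M : ℝ → Ω → ℝ) (S : Set Ω) : ℝ → Ω → ℝ := fun t =>
  S.indicator fun ω => limUnder (dyadicRight t) fun q => M q ω

section Regularization

variable {m0 : MeasurableSpace Ω} {μ : Measure Ω} {F : ℝ → MeasurableSpace Ω} {M : ℝ → Ω → ℝ}
  {S : Set Ω} {ξ : Ω → ℝ} {K : ℝ}

lemma UsualConditions.mono (hF : UsualConditions μ F) {s t : ℝ} (hs : 0 ≤ s) (hst : s ≤ t) :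
    F s ≤ F t := hF.1.1 s t hs hst

lemma UsualConditions.le (hF : UsualConditions μ F) (t : ℝ) : F t ≤ m0 := hF.1.2 t

lemma measurable_rcReg {t : ℝ} {f : Ω → ℝ} (h : ∀ s > t, Measurable[F s] f) :
    Measurable[rcReg F t] f := fun _ hB =>
  MeasurableSpace.measurableSet_iInf.2 fun s => MeasurableSpace.measurableSet_iInf.2 fun hs =>
    h s hs hB

lemma tendsto_dyadicRegularization
    (hS : ∀ ω ∈ S, ∀ t, 0 ≤ t → ∃ c, Tendsto (fun q => M q ω) (dyadicRight t) (𝓝 c))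
    {ω : Ω} (hω : ω ∈ S) {t : ℝ} (ht : 0 ≤ t) :
    Tendsto (fun q => M q ω) (dyadicRight t) (𝓝 (dyadicRegularization M S t ω)) := by
  have := dyadicRight_neBot ht
  rw [dyadicRegularization, Set.indicator_of_mem hω]
  exact tendsto_nhds_limUnder (hS ω hω t ht)

lemma rcPaths_dyadicRegularization
    (hS : ∀ ω ∈ S, ∀ t, 0 ≤ t → ∃ c, Tendsto (fun q => M q ω) (dyadicRight t) (𝓝 c)) :
    RCPaths (dyadicRegularization M S) := by
  intro ω t ht
  by_cases hω : ω ∈ S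
  · exact continuousWithinAt_Ici_of_tendsto_dyadicRight
      (fun s hs => tendsto_dyadicRegularization hS hω hs) ht
  · simp only [dyadicRegularization, Set.indicator_of_notMem hω]
    exact continuousWithinAt_const

lemma measurable_dyadicRegularization (hF : UsualConditions μ F)
    (hM : ∀ t, 0 ≤ t → Measurable[F t] (M t)) (hS₀ : MeasurableSet[F 0] S)
    (hS : ∀ ω ∈ S, ∀ t, 0 ≤ t → ∃ c, Tendsto (fun q => M q ω) (dyadicRight t) (𝓝 c))
    {t : ℝ} (ht : 0 ≤ t) : Measurable[F t] (dyadicRegularization M S t) := by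
  rw [hF.2.1 t ht]
  refine measurable_rcReg fun s hts => ?_
  obtain ⟨n₀, hn₀⟩ := eventually_atTop.1 <|
    (tendsto_dyadicCeil ht).eventually (eventually_dyadicRight_mem_Ioo hts)
  refine @measurable_of_tendsto_metrizable Ω ℝ (F s) _ _ _ _
    (fun n => S.indicator (M (dyadicCeil t (n + n₀)))) _ (fun n => ?_) ?_
  · have hceil : dyadicCeil t (n + n₀) ≤ s := (hn₀ _ (Nat.le_add_left _ _)).2.2.le
    have h0 : 0 ≤ dyadicCeil t (n + n₀) := ht.trans (lt_dyadicCeil t _).le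
    exact Measurable.indicator (m := F s) ((hM _ h0).mono (hF.mono h0 hceil) le_rfl)
      (hF.mono le_rfl (ht.trans hts.le) _ hS₀)
  · refine tendsto_pi_nhds.2 fun ω => ?_
    by_cases hω : ω ∈ S
    · simp only [Set.indicator_of_mem hω]
      exact (tendsto_add_atTop_iff_nat n₀).2
        ((tendsto_dyadicRegularization hS hω ht).comp (tendsto_dyadicCeil ht))
    · simp [dyadicRegularization, hω]

variable [IsProbabilityMeasure μ]

lemma nonneg_of_ae_abs_le (hK : ∀ᵐ ω ∂μ, |ξ ω| ≤ K) : 0 ≤ K :=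
  let ⟨_, hω⟩ := hK.exists
  (abs_nonneg _).trans hω

lemma ae_liminf_upcrossings_condExp_lt_top (hF : IsFiltration m0 F)
    (hK : ∀ᵐ ω ∂μ, |ξ ω| ≤ K) {a b : ℝ} (hab : a < b) :
    ∀ᵐ ω ∂μ, liminf (fun n => upcrossings a b (dyadicSample (fun t => μ[ξ | F t]) n) ω) atTop
      < ∞ := by
  set X : ℕ → ℕ → Ω → ℝ := dyadicSample fun t => μ[ξ | F t]
  let ℱ (n : ℕ) : Filtration ℕ m0 :=
    { seq := fun j => F ((j : ℝ) / 2 ^ n)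
      mono' := fun i j hij => hF.1 _ _ (by positivity) (by gcongr)
      le' := fun j => hF.2 _ }
  have hmart (n : ℕ) : Martingale (X n) (ℱ n) μ := martingale_condExp ξ (ℱ n) μ
  have hpos (n N : ℕ) : ∫⁻ ω, ENNReal.ofReal ((X n N ω - a)⁺) ∂μ ≤ ENNReal.ofReal (K + |a|) := by
    refine (lintegral_mono_ae (g := fun _ => ENNReal.ofReal (K + |a|)) ?_).trans (by simp)
    filter_upwards [ae_bdd_abs_condExp_of_ae_bdd_abs (m := F ((N : ℝ) / 2 ^ n)) hK] with ω hω
    refine ENNReal.ofReal_le_ofReal (sup_le ?_ ?_)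
    · exact (le_abs_self _).trans ((abs_sub _ _).trans (by gcongr; exact hω))
    · have := nonneg_of_ae_abs_le hK
      positivity
  have hbound (n : ℕ) : ∫⁻ ω, upcrossings a b (X n) ω ∂μ ≤
      ENNReal.ofReal (K + |a|) / ENNReal.ofReal (b - a) := by
    rw [ENNReal.le_div_iff_mul_le (Or.inl (by simpa using hab)) (Or.inl ENNReal.ofReal_ne_top),
      mul_comm]
    exact ((hmart n).submartingale.mul_lintegral_upcrossings_le_lintegral_pos_part a b).trans
      (iSup_le (hpos n))
  have hmeas (n : ℕ) : Measurable (upcrossings a b (X n)) := (hmart n).1.measurable_upcrossings hab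
  refine ae_lt_top (Measurable.liminf hmeas) (ne_of_lt ?_)
  calc ∫⁻ ω, liminf (fun n => upcrossings a b (X n) ω) atTop ∂μ
      ≤ liminf (fun n => ∫⁻ ω, upcrossings a b (X n) ω ∂μ) atTop := lintegral_liminf_le hmeas
    _ ≤ ENNReal.ofReal (K + |a|) / ENNReal.ofReal (b - a) :=
        liminf_le_of_frequently_le' (Frequently.of_forall hbound)
    _ < ∞ := ENNReal.div_lt_top ENNReal.ofReal_ne_top (by simpa using hab)

lemma ae_exists_tendsto_condExp_dyadicRight (hF : IsFiltration m0 F)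
    (hK : ∀ᵐ ω ∂μ, |ξ ω| ≤ K) :
    ∀ᵐ ω ∂μ, ∀ t, 0 ≤ t → ∃ c, Tendsto (fun q => μ[ξ | F q] ω) (dyadicRight t) (𝓝 c) := by
  have hbdd : ∀ᵐ ω ∂μ, ∀ q ∈ dyadics, |μ[ξ | F q] ω| ≤ K :=
    (ae_ball_iff countable_dyadics).2 fun q _ => ae_bdd_abs_condExp_of_ae_bdd_abs hK
  have hup : ∀ᵐ ω ∂μ, ∀ a b : ℚ, a < b → liminf (fun n =>
      upcrossings (a : ℝ) (b : ℝ) (dyadicSample (fun t => μ[ξ | F t]) n) ω) atTop < ∞ :=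
    ae_all_iff.2 fun a => ae_all_iff.2 fun b => eventually_imp_distrib_left.2 fun hab =>
      ae_liminf_upcrossings_condExp_lt_top hF hK (mod_cast hab)
  filter_upwards [hbdd, hup] with ω hbddω hupω t ht
  exact exists_tendsto_dyadicRight hbddω hupω ht

lemma dyadicRegularization_condExp_ae_eq (hF : UsualConditions μ F) (hξ : Integrable ξ μ)
    (hK : ∀ᵐ ω ∂μ, |ξ ω| ≤ K) (hSae : ∀ᵐ ω ∂μ, ω ∈ S) (hS₀ : MeasurableSet[F 0] S)
    (hS : ∀ ω ∈ S, ∀ t, 0 ≤ t → ∃ c, Tendsto (fun q => μ[ξ | F q] ω) (dyadicRight t) (𝓝 c))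
    {t : ℝ} (ht : 0 ≤ t) :
    dyadicRegularization (fun t => μ[ξ | F t]) S t =ᵐ[μ] μ[ξ | F t] := by
  set M := dyadicRegularization (fun t => μ[ξ | F t]) S
  have hMmeas : Measurable[F t] (M t) := measurable_dyadicRegularization hF
    (fun t _ => stronglyMeasurable_condExp.measurable) hS₀ hS ht
  have hbdd (n : ℕ) : ∀ᵐ ω ∂μ, |μ[ξ | F (dyadicCeil t n)] ω| ≤ K :=
    ae_bdd_abs_condExp_of_ae_bdd_abs hK
  have hlim : ∀ᵐ ω ∂μ, Tendsto (fun n => μ[ξ | F (dyadicCeil t n)] ω) atTop (𝓝 (M t ω)) := by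
    filter_upwards [hSae] with ω hω
    exact (tendsto_dyadicRegularization hS hω ht).comp (tendsto_dyadicCeil ht)
  have hMint : Integrable (M t) μ := by
    refine Integrable.of_bound (hMmeas.mono (hF.le t) le_rfl).aestronglyMeasurable K ?_
    filter_upwards [hlim, ae_all_iff.2 hbdd] with ω hlimω hbddω
    exact le_of_tendsto hlimω.abs (Eventually.of_forall hbddω)
  refine ae_eq_condExp_of_forall_setIntegral_eq (hF.le t) hξ (fun _ _ _ => hMint.integrableOn)
    (fun B hB _ => ?_) hMmeas.stronglyMeasurable.aestronglyMeasurable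
  have hconst (n : ℕ) : ∫ ω in B, μ[ξ | F (dyadicCeil t n)] ω ∂μ = ∫ ω in B, ξ ω ∂μ :=
    setIntegral_condExp (hF.le _) hξ (hF.mono ht (lt_dyadicCeil t n).le _ hB)
  have hconv := tendsto_integral_of_dominated_convergence (μ := μ.restrict B) (fun _ => K)
    (fun n => integrable_condExp.aestronglyMeasurable.restrict) (integrable_const K)
    (fun n => ae_restrict_of_ae (hbdd n)) (ae_restrict_of_ae hlim)
  exact tendsto_nhds_unique hconv (by simpa only [hconst] using tendsto_const_nhds)

theorem exists_rcPaths_isMartingale_ae_eq_condExp (hF : UsualConditions μ F)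
    (hξ : Integrable ξ μ) (hK : ∀ᵐ ω ∂μ, |ξ ω| ≤ K) :
    ∃ M : ℝ → Ω → ℝ, RCPaths M ∧ IsMartingale μ F M ∧ ∀ t, 0 ≤ t → M t =ᵐ[μ] μ[ξ | F t] := by
  set S : Set Ω :=
    {ω | ∀ t, 0 ≤ t → ∃ c, Tendsto (fun q => μ[ξ | F q] ω) (dyadicRight t) (𝓝 c)}
  have hSae : ∀ᵐ ω ∂μ, ω ∈ S := ae_exists_tendsto_condExp_dyadicRight hF.1 hK
  have hS₀ : MeasurableSet[F 0] S := MeasurableSet.compl_iff.1 (hF.2.2 Sᶜ hSae)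
  have hS : ∀ ω ∈ S, _ := fun ω hω => hω
  have hM {t : ℝ} (ht : 0 ≤ t) := dyadicRegularization_condExp_ae_eq hF hξ hK hSae hS₀ hS ht
  refine ⟨_, rcPaths_dyadicRegularization hS,
    ⟨fun t ht => integrable_condExp.congr (hM ht).symm, fun t ht => measurable_dyadicRegularization
      hF (fun t _ => stronglyMeasurable_condExp.measurable) hS₀ hS ht, fun s t hs hst => ?_⟩,
    fun t ht => hM ht⟩
  calc μ[_ | F s] =ᵐ[μ] μ[μ[ξ | F t] | F s] := condExp_congr_ae (hM (hs.trans hst))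
    _ =ᵐ[μ] μ[ξ | F s] := condExp_condExp_of_le (hF.mono hs hst) (hF.le t)
    _ =ᵐ[μ] _ := (hM hs).symm

end Regularization

/-- `f` is almost everywhere `m`-measurable and bounded by `K`: the test variables against which
conditional expectations and martingale increments are integrated. -/
def BddMeas {_ : MeasurableSpace Ω} (μ : Measure Ω) (m : MeasurableSpace Ω) (K : ℝ)
    (f : Ω → ℝ) : Prop :=
  AEStronglyMeasurable[m] f μ ∧ ∀ᵐ ω ∂μ, |f ω| ≤ K

section BddMeas

variable {m m' m0 : MeasurableSpace Ω} {μ : Measure Ω} {K K' : ℝ} {f g : Ω → ℝ}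

lemma BddMeas.mono (hf : BddMeas μ m K f) (hm : m ≤ m') : BddMeas μ m' K f :=
  ⟨hf.1.mono hm, hf.2⟩

lemma BddMeas.congr (hf : BddMeas μ m K f) (hfg : f =ᵐ[μ] g) : BddMeas μ m K g :=
  ⟨hf.1.congr hfg, by filter_upwards [hf.2, hfg] with ω hω hfgω using hfgω ▸ hω⟩

lemma BddMeas.mul (hf : BddMeas μ m K f) (hg : BddMeas μ m K' g) :
    BddMeas μ m (K * K') fun ω => f ω * g ω := by
  refine ⟨hf.1.mul hg.1, ?_⟩
  filter_upwards [hf.2, hg.2] with ω hfω hgω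
  rw [abs_mul]
  exact mul_le_mul hfω hgω (abs_nonneg _) ((abs_nonneg _).trans hfω)

lemma BddMeas.sub (hf : BddMeas μ m K f) (hg : BddMeas μ m K' g) :
    BddMeas μ m (K + K') fun ω => f ω - g ω := by
  refine ⟨hf.1.sub hg.1, ?_⟩
  filter_upwards [hf.2, hg.2] with ω hfω hgω using (abs_sub _ _).trans (add_le_add hfω hgω)

lemma BddMeas.condExp (hf : BddMeas μ m' K f) : BddMeas μ m K (μ[f | m]) :=
  ⟨stronglyMeasurable_condExp.aestronglyMeasurable, ae_bdd_abs_condExp_of_ae_bdd_abs hf.2⟩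

lemma bddMeas_indicator_one {B : Set Ω} (hB : MeasurableSet[m] B) :
    BddMeas μ m 1 (B.indicator 1) :=
  ⟨((measurable_const (a := (1 : ℝ))).indicator hB).aestronglyMeasurable,
    Eventually.of_forall fun ω => by by_cases h : ω ∈ B <;> simp [h]⟩

lemma BddMeas.integrable_mul (hg : BddMeas μ m K g) (hm : m ≤ m0) (hf : Integrable f μ) :
    Integrable (fun ω => f ω * g ω) μ :=
  hf.mul_bdd (c := K) (hg.1.mono hm) hg.2

lemma setIntegral_eq_integral_indicator_mul {B : Set Ω} (hB : MeasurableSet B) (f : Ω → ℝ) :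
    ∫ ω in B, f ω ∂μ = ∫ ω, B.indicator 1 ω * f ω ∂μ := by
  rw [← integral_indicator hB]
  congr 1 with ω
  by_cases h : ω ∈ B <;> simp [h]

variable [IsFiniteMeasure μ]

lemma BddMeas.integrable (hf : BddMeas μ m K f) (hm : m ≤ m0) : Integrable f μ :=
  Integrable.of_bound (hf.1.mono hm) K hf.2

lemma BddMeas.integrable_sq (hf : BddMeas μ m K f) (hm : m ≤ m0) :
    Integrable (fun ω => f ω ^ 2) μ := by
  simpa only [sq] using (hf.mul hf).integrable hm

lemma integral_mul_eq_integral_condExp_mul (hm : m ≤ m0) (hf : Integrable f μ)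
    (hg : BddMeas μ m K g) : ∫ ω, f ω * g ω ∂μ = ∫ ω, (μ[f | m]) ω * g ω ∂μ := by
  rw [← integral_condExp hm]
  exact integral_congr_ae
    (condExp_mul_of_aestronglyMeasurable_right hg.1 (hg.integrable_mul hm hf) hf)

end BddMeas

section Immersion

variable {m0 : MeasurableSpace Ω} {μ : Measure Ω} [IsProbabilityMeasure μ]
  {H G : ℝ → MeasurableSpace Ω} {ξ Y : Ω → ℝ} {K K' T t : ℝ}

lemma Immersed.condExp_ae_eq (hI : Immersed μ H G) (hH : UsualConditions μ H)
    (hξ : BddMeas μ (H T) K ξ) (ht : 0 ≤ t) (htT : t ≤ T) : μ[ξ | G t] =ᵐ[μ] μ[ξ | H t] := by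
  have hξi := hξ.integrable (hH.le T)
  obtain ⟨M, hrc, hM, hMξ⟩ := exists_rcPaths_isMartingale_ae_eq_condExp hH hξi hξ.2
  have hMT : M T =ᵐ[μ] ξ :=
    (hMξ T (ht.trans htT)).trans (condExp_of_aestronglyMeasurable' (hH.le T) hξ.1 hξi)
  calc μ[ξ | G t] =ᵐ[μ] μ[M T | G t] := condExp_congr_ae hMT.symm
    _ =ᵐ[μ] M t := (hI.2 M hrc hM).2.2 t T ht htT
    _ =ᵐ[μ] μ[ξ | H t] := hMξ t ht

lemma Immersed.integral_mul_eq_integral_condExp_mul (hI : Immersed μ H G)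
    (hH : UsualConditions μ H) (hG : IsFiltration m0 G) (hξ : BddMeas μ (H T) K ξ) (ht : 0 ≤ t)
    (htT : t ≤ T) (hY : BddMeas μ (G t) K' Y) :
    ∫ ω, ξ ω * Y ω ∂μ = ∫ ω, (μ[ξ | H t]) ω * Y ω ∂μ := by
  rw [InvMarkovJump.integral_mul_eq_integral_condExp_mul (hG.2 t) (hξ.integrable (hH.le T)) hY]
  refine integral_congr_ae ?_
  filter_upwards [hI.condExp_ae_eq hH hξ ht htT] with ω hω
  rw [hω]

lemma Immersed.integral_mul_eq_integral_mul_condExp (hI : Immersed μ H G)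
    (hH : UsualConditions μ H) (hG : IsFiltration m0 G) (hξ : BddMeas μ (H T) K ξ) (ht : 0 ≤ t)
    (htT : t ≤ T) (hY : BddMeas μ (G t) K' Y) :
    ∫ ω, ξ ω * Y ω ∂μ = ∫ ω, ξ ω * (μ[Y | H t]) ω ∂μ := by
  rw [hI.integral_mul_eq_integral_condExp_mul hH hG hξ ht htT hY,
    InvMarkovJump.integral_mul_eq_integral_condExp_mul (hH.le t) (hξ.integrable (hH.le T))
      (hY.condExp (m := H t))]
  simp only [mul_comm]
  rw [InvMarkovJump.integral_mul_eq_integral_condExp_mul (hH.le t) (hY.integrable (hG.2 t))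
    (hξ.condExp (m := H t))]
  simp only [mul_comm]

end Immersion

section BoundedKernel

variable {α : Type*} {mα : MeasurableSpace α} {ν : Measure α} [IsFiniteMeasure ν]
  {m0 : MeasurableSpace Ω} {μ : Measure Ω} {κ : α → Ω → ℝ} {C : ℝ} {ζ : Ω → ℝ}

lemma integrable_prod_mul_of_abs_le (hκm : Measurable (Function.uncurry κ))
    (hκC : ∀ u ω, |κ u ω| ≤ C) (hζ : Integrable ζ μ) :
    Integrable (Function.uncurry fun ω u => ζ ω * κ u ω) (μ.prod ν) :=
  (hζ.comp_fst ν).mul_bdd (c := C) (hκm.comp measurable_swap).aestronglyMeasurable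
    (Eventually.of_forall fun p => hκC p.2 p.1)

variable [IsFiniteMeasure μ]

lemma integral_mul_integral_swap (hκm : Measurable (Function.uncurry κ))
    (hκC : ∀ u ω, |κ u ω| ≤ C) (hζ : Integrable ζ μ) :
    ∫ ω, ζ ω * (∫ u, κ u ω ∂ν) ∂μ = ∫ u, ∫ ω, ζ ω * κ u ω ∂μ ∂ν := by
  rw [← integral_integral_swap (integrable_prod_mul_of_abs_le hκm hκC hζ)]
  simp only [integral_const_mul]

lemma integrable_integral_mul (hκm : Measurable (Function.uncurry κ))
    (hκC : ∀ u ω, |κ u ω| ≤ C) (hζ : Integrable ζ μ) :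
    Integrable (fun u => ∫ ω, ζ ω * κ u ω ∂μ) ν :=
  (integrable_prod_mul_of_abs_le hκm hκC hζ).integral_prod_right

lemma bddMeas_integral (hκm : Measurable (Function.uncurry κ)) (hκC : ∀ u ω, |κ u ω| ≤ C) :
    BddMeas μ m0 (C * ν.real univ) fun ω => ∫ u, κ u ω ∂ν := by
  refine ⟨?_, Eventually.of_forall fun ω => (Real.norm_eq_abs _).symm.trans_le <|
    norm_integral_le_of_norm_le_const (Eventually.of_forall fun u => hκC u ω)⟩
  have := (integrable_prod_mul_of_abs_le (ν := ν) hκm hκC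
    (integrable_const (μ := μ) (1 : ℝ))).integral_prod_left
  simpa using this.1

end BoundedKernel

/-- The `n + 2` points dividing `[s, t]` into `n + 1` intervals of equal length. -/
def uniformGrid (s t : ℝ) (n i : ℕ) : ℝ := s + i * ((t - s) / (n + 1))

section UniformGrid

variable {s t : ℝ} {n i : ℕ}

lemma uniformGrid_zero : uniformGrid s t n 0 = s := by simp [uniformGrid]

lemma uniformGrid_last : uniformGrid s t n (n + 1) = t := by
  rw [uniformGrid]
  push_cast
  field_simp
  ring

lemma uniformGrid_succ_sub :
    uniformGrid s t n (i + 1) - uniformGrid s t n i = (t - s) / (n + 1) := by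
  rw [uniformGrid, uniformGrid]
  push_cast
  ring

lemma monotone_uniformGrid (hst : s ≤ t) (n : ℕ) : Monotone (uniformGrid s t n) := by
  refine monotone_nat_of_le_succ fun i => sub_nonneg.1 ?_
  rw [uniformGrid_succ_sub]
  exact div_nonneg (sub_nonneg.2 hst) (by positivity)

lemma le_uniformGrid (hst : s ≤ t) (n i : ℕ) : s ≤ uniformGrid s t n i := by
  simpa only [uniformGrid_zero] using monotone_uniformGrid hst n (Nat.zero_le i)

lemma uniformGrid_le (hst : s ≤ t) (hi : i ≤ n + 1) : uniformGrid s t n i ≤ t := by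
  simpa only [uniformGrid_last] using monotone_uniformGrid hst n hi

lemma tendsto_uniformGrid_mesh (c : ℝ) :
    Tendsto (fun n : ℕ => c / ((n : ℝ) + 1)) atTop (𝓝 0) :=
  tendsto_const_nhds.div_atTop (tendsto_natCast_atTop_atTop.atTop_add tendsto_const_nhds)

lemma sum_sq_sub_le {f : ℕ → ℝ} {δ : ℝ} (hf : Antitone f) (hδ : ∀ i < n, f i - f (i + 1) ≤ δ) :
    ∑ i ∈ Finset.range n, (f i - f (i + 1)) ^ 2 ≤ δ * (f 0 - f n) := by
  rw [← Finset.sum_range_sub' f n, Finset.mul_sum]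
  refine Finset.sum_le_sum fun i hi => ?_
  rw [sq]
  exact mul_le_mul_of_nonneg_right (hδ i (Finset.mem_range.1 hi))
    (sub_nonneg.2 (hf (Nat.le_succ i)))

lemma tendsto_sum_sq_sub_uniformGrid {f : ℝ → ℝ} (hf : Continuous f) (hst : s ≤ t)
    (hanti : ∀ n, Antitone fun i => f (uniformGrid s t n i)) :
    Tendsto (fun n : ℕ => ∑ i ∈ Finset.range (n + 1),
      (f (uniformGrid s t n i) - f (uniformGrid s t n (i + 1))) ^ 2) atTop (𝓝 0) := by
  have hfst : 0 ≤ f s - f t := by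
    have := hanti 0 (Nat.zero_le (0 + 1))
    simp only [uniformGrid_zero, uniformGrid_last] at this
    linarith
  have huc := Metric.uniformContinuousOn_iff.1
    (isCompact_Icc.uniformContinuousOn_of_continuous (s := Icc s t) hf.continuousOn)
  refine Metric.tendsto_atTop.2 fun ε hε => ?_
  have hδ : 0 < ε / (f s - f t + 1) := by positivity
  obtain ⟨d, hd, hclose⟩ := huc _ hδ
  obtain ⟨N, hN⟩ := Metric.tendsto_atTop.1 (tendsto_uniformGrid_mesh (t - s)) d hd
  refine ⟨N, fun n hn => ?_⟩
  have hosc : ∀ i < n + 1, f (uniformGrid s t n i) - f (uniformGrid s t n (i + 1)) ≤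
      ε / (f s - f t + 1) := fun i hi => (le_abs_self _).trans
    (hclose _ ⟨le_uniformGrid hst n i, uniformGrid_le hst hi.le⟩ _
      ⟨le_uniformGrid hst n _, uniformGrid_le hst hi⟩ (by
        rw [dist_comm, Real.dist_eq, uniformGrid_succ_sub, ← Real.norm_eq_abs, ← dist_zero_right]
        exact hN n hn)).le
  have hsum := sum_sq_sub_le (hanti n) hosc
  rw [uniformGrid_zero, uniformGrid_last] at hsum
  rw [dist_zero_right, Real.norm_of_nonneg (Finset.sum_nonneg fun i _ => sq_nonneg _)]
  refine hsum.trans_lt ?_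
  rw [div_mul_eq_mul_div, div_lt_iff₀ (by linarith)]
  nlinarith

end UniformGrid

/-- The indicator process of `{t < σ}`. -/
def survival (σ : Ω → ℝ) (t : ℝ) (ω : Ω) : ℝ := if t < σ ω then 1 else 0

lemma survival_nonneg (σ : Ω → ℝ) (t : ℝ) (ω : Ω) : 0 ≤ survival σ t ω := by
  rw [survival]; split_ifs <;> simp

lemma survival_le_one (σ : Ω → ℝ) (t : ℝ) (ω : Ω) : survival σ t ω ≤ 1 := by
  rw [survival]; split_ifs <;> simp

lemma antitone_survival (σ : Ω → ℝ) (ω : Ω) : Antitone fun t => survival σ t ω := by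
  intro s t hst
  by_cases ht : t < σ ω
  · simp [survival, ht, hst.trans_lt ht]
  · simpa only [survival, ht, if_false] using survival_nonneg σ s ω

lemma bddMeas_survival {m m0 : MeasurableSpace Ω} {μ : Measure Ω} {σ : Ω → ℝ} {t : ℝ}
    (hσ : MeasurableSet[m] {ω | σ ω ≤ t}) : BddMeas μ m 1 (survival σ t) := by
  have hlt : MeasurableSet[m] {ω | t < σ ω} := by
    simpa only [compl_ofPred, not_le] using hσ.compl
  exact ⟨(Measurable.ite hlt measurable_const measurable_const).aestronglyMeasurable,
    Eventually.of_forall fun ω =>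
      abs_le.2 ⟨by linarith [survival_nonneg σ t ω], survival_le_one σ t ω⟩⟩

lemma abs_mul_sub_le {ε c x y z : ℝ} (hε : 0 < ε) (hz : |z| ≤ c) :
    |x * (y - z)| ≤ ε * x ^ 2 + 1 / (2 * ε) * (y ^ 2 + c ^ 2) := by
  have hyoung : |x * (y - z)| ≤ ε * x ^ 2 + 1 / (4 * ε) * (y - z) ^ 2 := by
    have hsq : ε * x ^ 2 + 1 / (4 * ε) * (y - z) ^ 2 - |x * (y - z)| =
        (2 * ε * |x| - |y - z|) ^ 2 / (4 * ε) := by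
      rw [abs_mul, ← sq_abs x, ← sq_abs (y - z)]
      field_simp
      ring
    have : 0 ≤ (2 * ε * |x| - |y - z|) ^ 2 / (4 * ε) := by positivity
    linarith
  have hsplit : (y - z) ^ 2 ≤ 2 * (y ^ 2 + c ^ 2) := by
    nlinarith [sq_nonneg (y + z), sq_le_sq' (abs_le.1 hz).1 (abs_le.1 hz).2]
  calc |x * (y - z)| ≤ ε * x ^ 2 + 1 / (4 * ε) * (y - z) ^ 2 := hyoung
    _ ≤ ε * x ^ 2 + 1 / (4 * ε) * (2 * (y ^ 2 + c ^ 2)) := by gcongr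
    _ = _ := by field_simp; ring

lemma integral_sq_sub_condExp {m0 : MeasurableSpace Ω} {μ : Measure Ω}
    [IsProbabilityMeasure μ] {H : ℝ → MeasurableSpace Ω} {ξ : Ω → ℝ} {K T s r : ℝ}
    (hH : UsualConditions μ H) (hs : 0 ≤ s) (hsr : s ≤ r)
    (hξ : BddMeas μ (H T) K ξ) :
    ∫ ω, ((μ[ξ | H r]) ω - (μ[ξ | H s]) ω) ^ 2 ∂μ =
      ∫ ω, (μ[ξ | H r]) ω ^ 2 ∂μ - ∫ ω, (μ[ξ | H s]) ω ^ 2 ∂μ := by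
  have hNr : BddMeas μ (H r) K (μ[ξ | H r]) := hξ.condExp
  have hNs : BddMeas μ (H s) K (μ[ξ | H s]) := hξ.condExp
  have hcross : ∫ ω, (μ[ξ | H r]) ω * (μ[ξ | H s]) ω ∂μ = ∫ ω, (μ[ξ | H s]) ω ^ 2 ∂μ := by
    rw [integral_mul_eq_integral_condExp_mul (hH.le s) integrable_condExp hNs]
    refine integral_congr_ae ?_
    filter_upwards [condExp_condExp_of_le (f := ξ) (μ := μ) (hH.mono hs hsr) (hH.le r)] with ω hω
    rw [hω, sq]
  have hsq (ω : Ω) : ((μ[ξ | H r]) ω - (μ[ξ | H s]) ω) ^ 2 = (μ[ξ | H r]) ω ^ 2 -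
      2 * ((μ[ξ | H r]) ω * (μ[ξ | H s]) ω) + (μ[ξ | H s]) ω ^ 2 := by ring
  have hrr := hNr.integrable_sq (hH.le r)
  have hrs := (hNs.integrable_mul (hH.le s) (hNr.integrable (hH.le r))).const_mul 2
  have hdiff : Integrable (fun ω => (μ[ξ | H r]) ω ^ 2 -
    2 * ((μ[ξ | H r]) ω * (μ[ξ | H s]) ω)) μ := hrr.sub hrs
  simp only [hsq]
  rw [integral_add hdiff (hNs.integrable_sq (hH.le s)), integral_sub hrr hrs,
    integral_const_mul, hcross]
  ring

/-- The increment over `(s, t]` of the single jump process `1_{σ ≤ ·}` compensated by the intensity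
`κ`. -/
def compIncr (σ : Ω → ℝ) (κ : ℝ → Ω → ℝ) (s t : ℝ) (ω : Ω) : ℝ :=
  survival σ s ω - survival σ t ω - ∫ u in Ioc s t, κ u ω

/-- Up to the horizon `T`, `κ` is a bounded `G`-intensity of the random time `σ`, whose Azéma
supermartingale `Z` with respect to the immersed filtration `H` is continuous. -/
structure IsJumpIntensity {m0 : MeasurableSpace Ω} (μ : Measure Ω) (H G : ℝ → MeasurableSpace Ω)
    (σ : Ω → ℝ) (Z κ : ℝ → Ω → ℝ) (C T : ℝ) : Prop where
  usualConditions : UsualConditions μ H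
  isFiltration : IsFiltration m0 G
  immersed : Immersed μ H G
  measurableSet_le : ∀ t, 0 ≤ t → MeasurableSet[G t] {ω | σ ω ≤ t}
  continuous_azema : ∀ ω, Continuous fun t => Z t ω
  azema_ae_eq : ∀ t, 0 ≤ t → Z t =ᵐ[μ] μ[survival σ t | H t]
  measurable_uncurry : Measurable (Function.uncurry κ)
  abs_intensity_le : ∀ u ω, |κ u ω| ≤ C
  adapted : ∀ u, 0 < u → u ≤ T → Measurable[G u] (κ u)
  setIntegral_compIncr : ∀ s t, 0 ≤ s → s ≤ t → t ≤ T → ∀ B, MeasurableSet[G s] B →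
    ∫ ω in B, compIncr σ κ s t ω ∂μ = 0

namespace IsJumpIntensity

variable {m0 : MeasurableSpace Ω} {μ : Measure Ω}
  {H G : ℝ → MeasurableSpace Ω} {σ ξ ζ : Ω → ℝ} {Z κ : ℝ → Ω → ℝ} {C T K s t r ε : ℝ}

lemma bddMeas_survival (h : IsJumpIntensity μ H G σ Z κ C T) (hs : 0 ≤ s) (hst : s ≤ t) :
    BddMeas μ (G t) 1 (survival σ s) :=
  (InvMarkovJump.bddMeas_survival (h.measurableSet_le s hs)).mono (h.isFiltration.1 s t hs hst)

lemma compIncr_eq_sub (h : IsJumpIntensity μ H G σ Z κ C T) (hs : 0 ≤ s) (hst : s ≤ t) (ω : Ω) :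
    compIncr σ κ s t ω = (survival σ s ω + ∫ u in Ioc 0 s, κ u ω) -
      (survival σ t ω + ∫ u in Ioc 0 t, κ u ω) := by
  have hint (a b : ℝ) : IntegrableOn (fun u => κ u ω) (Ioc a b) :=
    Integrable.of_bound (h.measurable_uncurry.comp measurable_prodMk_right).aestronglyMeasurable C
      (Eventually.of_forall fun u => h.abs_intensity_le u ω)
  rw [compIncr, ← Ioc_union_Ioc_eq_Ioc hs hst, setIntegral_union (Ioc_disjoint_Ioc_of_le le_rfl)
    measurableSet_Ioc (hint 0 s) (hint s t)]
  ring

lemma bddMeas_azema (h : IsJumpIntensity μ H G σ Z κ C T) (hs : 0 ≤ s) (hst : s ≤ t) :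
    BddMeas μ (H t) 1 (Z s) :=
  ((h.bddMeas_survival hs le_rfl).condExp.congr (h.azema_ae_eq s hs).symm).mono
    (h.usualConditions.mono hs hst)

variable [IsProbabilityMeasure μ]

lemma integral_mul_survival (h : IsJumpIntensity μ H G σ Z κ C T) (hζ : BddMeas μ (H r) K ζ)
    (ht : 0 ≤ t) (htr : t ≤ r) : ∫ ω, ζ ω * survival σ t ω ∂μ = ∫ ω, ζ ω * Z t ω ∂μ := by
  rw [h.immersed.integral_mul_eq_integral_mul_condExp h.usualConditions h.isFiltration hζ ht htr
    (h.bddMeas_survival ht le_rfl)]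
  refine integral_congr_ae ?_
  filter_upwards [h.azema_ae_eq t ht] with ω hω
  rw [hω]

lemma azema_ae_eq_condExp (h : IsJumpIntensity μ H G σ Z κ C T) (hs : 0 ≤ s) (hst : s ≤ t) :
    Z s =ᵐ[μ] μ[survival σ s | H t] := by
  have hHt := h.usualConditions.le t
  refine ae_eq_condExp_of_forall_setIntegral_eq hHt
    ((h.bddMeas_survival hs hst).integrable (h.isFiltration.2 t))
    (fun _ _ _ => ((h.bddMeas_azema hs hst).integrable hHt).integrableOn) (fun B hB _ => ?_)
    (h.bddMeas_azema hs hst).1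
  rw [setIntegral_eq_integral_indicator_mul (hHt B hB),
    setIntegral_eq_integral_indicator_mul (hHt B hB),
    h.integral_mul_survival (bddMeas_indicator_one hB) hs hst]

lemma azema_ae_le (h : IsJumpIntensity μ H G σ Z κ C T) (hs : 0 ≤ s) (hst : s ≤ t) :
    Z t ≤ᵐ[μ] Z s := by
  have hmono : μ[survival σ t | H t] ≤ᵐ[μ] μ[survival σ s | H t] := condExp_mono
    ((h.bddMeas_survival (hs.trans hst) le_rfl).integrable (h.isFiltration.2 t))
    ((h.bddMeas_survival hs hst).integrable (h.isFiltration.2 t))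
    (Eventually.of_forall fun ω => antitone_survival σ ω hst)
  filter_upwards [hmono, h.azema_ae_eq t (hs.trans hst), h.azema_ae_eq_condExp hs hst]
    with ω hω ht hs
  rwa [ht, hs]

lemma bddMeas_compIncr (h : IsJumpIntensity μ H G σ Z κ C T) (hs : 0 ≤ s) (hst : s ≤ t) :
    BddMeas μ m0 (1 + 1 + C * (volume.restrict (Ioc s t)).real univ) (compIncr σ κ s t) :=
  (((h.bddMeas_survival hs hst).sub (h.bddMeas_survival (hs.trans hst) le_rfl)).mono
    (h.isFiltration.2 t)).sub (bddMeas_integral h.measurable_uncurry h.abs_intensity_le)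

lemma integral_mul_compIncr (h : IsJumpIntensity μ H G σ Z κ C T) (hs : 0 ≤ s) (hst : s ≤ t)
    (hζ : Integrable ζ μ) : ∫ ω, ζ ω * compIncr σ κ s t ω ∂μ =
      ∫ ω, ζ ω * (survival σ s ω - survival σ t ω) ∂μ -
        ∫ u in Ioc s t, ∫ ω, ζ ω * κ u ω ∂μ := by
  have hS := (h.bddMeas_survival hs hst).sub (h.bddMeas_survival (hs.trans hst) le_rfl)
  rw [← integral_mul_integral_swap h.measurable_uncurry h.abs_intensity_le hζ,
    ← integral_sub (hS.integrable_mul (h.isFiltration.2 t) hζ)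
      ((bddMeas_integral h.measurable_uncurry h.abs_intensity_le).integrable_mul le_rfl hζ)]
  simp only [compIncr, mul_sub]

lemma integral_mul_compIncr_of_bddMeas (h : IsJumpIntensity μ H G σ Z κ C T) (hs : 0 ≤ s)
    (hst : s ≤ t) (htT : t ≤ T) (hζ : BddMeas μ (G s) K ζ) :
    ∫ ω, ζ ω * compIncr σ κ s t ω ∂μ = 0 := by
  have hGs := h.isFiltration.2 s
  have hint := (h.bddMeas_compIncr hs hst).integrable le_rfl
  have hcond : μ[compIncr σ κ s t | G s] =ᵐ[μ] 0 := by
    refine (ae_eq_condExp_of_forall_setIntegral_eq hGs hint (fun _ _ _ => integrableOn_zero)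
      (fun B hB _ => ?_) aestronglyMeasurable_zero).symm
    simp only [integral_zero, h.setIntegral_compIncr s t hs hst htT B hB]
  simp only [mul_comm (ζ _)]
  rw [integral_mul_eq_integral_condExp_mul hGs hint hζ]
  refine integral_eq_zero_of_ae ?_
  filter_upwards [hcond] with ω hω
  simp [hω]

lemma integral_mul_compIncr_eq_condExp (h : IsJumpIntensity μ H G σ Z κ C T) (hs : 0 ≤ s)
    (hsr : s ≤ r) (hrT : r ≤ T) (hξ : BddMeas μ (H T) K ξ) :
    ∫ ω, ξ ω * compIncr σ κ s r ω ∂μ = ∫ ω, (μ[ξ | H r]) ω * compIncr σ κ s r ω ∂μ := by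
  have hr := hs.trans hsr
  have hproj {Y : Ω → ℝ} {K' : ℝ} (hY : BddMeas μ (G r) K' Y) :=
    h.immersed.integral_mul_eq_integral_condExp_mul h.usualConditions h.isFiltration hξ hr hrT hY
  rw [h.integral_mul_compIncr hs hsr (hξ.integrable (h.usualConditions.le T)),
    h.integral_mul_compIncr hs hsr integrable_condExp,
    hproj ((h.bddMeas_survival hs hsr).sub (h.bddMeas_survival hr le_rfl))]
  congr 1
  refine setIntegral_congr_fun measurableSet_Ioc fun u hu => hproj (K' := C) ⟨?_,
    Eventually.of_forall (h.abs_intensity_le u)⟩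
  have hu0 : 0 < u := hs.trans_lt hu.1
  exact ((h.adapted u hu0 (hu.2.trans hrT)).mono (h.isFiltration.1 u r hu0.le hu.2)
    le_rfl).aestronglyMeasurable

-- Both `μ[ξ | H s]` and the jump part of the increment can be subtracted off: the former is
-- orthogonal to the compensated increment, the latter projects onto the increment of `Z`.
lemma integral_mul_compIncr_eq_azema (h : IsJumpIntensity μ H G σ Z κ C T) (hs : 0 ≤ s)
    (hsr : s ≤ r) (hrT : r ≤ T) (hξ : BddMeas μ (H T) K ξ) :
    ∫ ω, ξ ω * compIncr σ κ s r ω ∂μ = ∫ ω, ((μ[ξ | H r]) ω - (μ[ξ | H s]) ω) *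
      (Z s ω - Z r ω - ∫ u in Ioc s r, κ u ω) ∂μ := by
  have hr := hs.trans hsr
  have hHr := h.usualConditions.le r
  have hNs : BddMeas μ (H s) K (μ[ξ | H s]) := hξ.condExp
  have hN : BddMeas μ (H r) (K + K) fun ω => (μ[ξ | H r]) ω - (μ[ξ | H s]) ω :=
    hξ.condExp.sub (hNs.mono (h.usualConditions.mono hs hsr))
  have hNi := hN.integrable hHr
  have hm := (h.bddMeas_compIncr hs hsr)
  have hκ : BddMeas μ m0 _ fun ω => ∫ u in Ioc s r, κ u ω :=
    bddMeas_integral h.measurable_uncurry h.abs_intensity_le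
  have hZ := (h.bddMeas_azema hs hsr).sub (h.bddMeas_azema hr le_rfl)
  have hsurv : ∫ ω, ((μ[ξ | H r]) ω - (μ[ξ | H s]) ω) * (survival σ s ω - survival σ r ω) ∂μ =
      ∫ ω, ((μ[ξ | H r]) ω - (μ[ξ | H s]) ω) * (Z s ω - Z r ω) ∂μ := by
    simp only [mul_sub (_ - _)]
    rw [integral_sub ((h.bddMeas_survival hs hsr).integrable_mul (h.isFiltration.2 r) hNi)
        ((h.bddMeas_survival hr le_rfl).integrable_mul (h.isFiltration.2 r) hNi),
      integral_sub ((h.bddMeas_azema hs hsr).integrable_mul hHr hNi)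
        ((h.bddMeas_azema hr le_rfl).integrable_mul hHr hNi),
      h.integral_mul_survival hN hs hsr, h.integral_mul_survival hN hr le_rfl]
  calc ∫ ω, ξ ω * compIncr σ κ s r ω ∂μ
      = ∫ ω, (μ[ξ | H r]) ω * compIncr σ κ s r ω ∂μ
          - ∫ ω, (μ[ξ | H s]) ω * compIncr σ κ s r ω ∂μ := by
        rw [h.integral_mul_compIncr_eq_condExp hs hsr hrT hξ,
          h.integral_mul_compIncr_of_bddMeas hs hsr hrT (hNs.mono (h.immersed.1 s hs)), sub_zero]
    _ = ∫ ω, ((μ[ξ | H r]) ω - (μ[ξ | H s]) ω) * compIncr σ κ s r ω ∂μ := by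
        rw [← integral_sub (hm.integrable_mul le_rfl integrable_condExp)
          (hm.integrable_mul le_rfl integrable_condExp)]
        simp only [sub_mul]
    _ = ∫ ω, ((μ[ξ | H r]) ω - (μ[ξ | H s]) ω) * (Z s ω - Z r ω) ∂μ -
          ∫ ω, ((μ[ξ | H r]) ω - (μ[ξ | H s]) ω) * (∫ u in Ioc s r, κ u ω) ∂μ := by
        rw [h.integral_mul_compIncr hs hsr hNi, hsurv,
          integral_mul_integral_swap h.measurable_uncurry h.abs_intensity_le hNi]
    _ = _ := by
        rw [← integral_sub (hZ.integrable_mul hHr hNi) (hκ.integrable_mul le_rfl hNi)]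
        simp only [← mul_sub]

lemma abs_integral_mul_compIncr_le (h : IsJumpIntensity μ H G σ Z κ C T) (hs : 0 ≤ s)
    (hsr : s ≤ r) (hrT : r ≤ T) (hξ : BddMeas μ (H T) K ξ) (hε : 0 < ε) :
    |∫ ω, ξ ω * compIncr σ κ s r ω ∂μ| ≤
      ε * (∫ ω, (μ[ξ | H r]) ω ^ 2 ∂μ - ∫ ω, (μ[ξ | H s]) ω ^ 2 ∂μ) +
        1 / (2 * ε) * (∫ ω, (Z s ω - Z r ω) ^ 2 ∂μ + (C * (r - s)) ^ 2) := by
  have hHr := h.usualConditions.le r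
  have hNs : BddMeas μ (H s) K (μ[ξ | H s]) := hξ.condExp
  have hN : BddMeas μ (H r) (K + K) fun ω => (μ[ξ | H r]) ω - (μ[ξ | H s]) ω :=
    hξ.condExp.sub (hNs.mono (h.usualConditions.mono hs hsr))
  have hZ := (h.bddMeas_azema hs hsr).sub (h.bddMeas_azema (hs.trans hsr) le_rfl)
  have hκ : ∀ᵐ ω ∂μ, |∫ u in Ioc s r, κ u ω| ≤ C * (r - s) := by
    simpa [measureReal_restrict_apply_univ, hsr] using
      (bddMeas_integral (ν := volume.restrict (Ioc s r)) h.measurable_uncurry h.abs_intensity_le).2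
  have hN2 := (hN.integrable_sq hHr).const_mul ε
  have hZ2 : Integrable (fun ω => 1 / (2 * ε) * ((Z s ω - Z r ω) ^ 2 + (C * (r - s)) ^ 2)) μ :=
    ((hZ.integrable_sq hHr).add (integrable_const _)).const_mul _
  rw [h.integral_mul_compIncr_eq_azema hs hsr hrT hξ, ← integral_sq_sub_condExp
    h.usualConditions hs hsr hξ]
  calc |∫ ω, ((μ[ξ | H r]) ω - (μ[ξ | H s]) ω) * (Z s ω - Z r ω - ∫ u in Ioc s r, κ u ω) ∂μ|
      ≤ ∫ ω, (ε * ((μ[ξ | H r]) ω - (μ[ξ | H s]) ω) ^ 2 +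
          1 / (2 * ε) * ((Z s ω - Z r ω) ^ 2 + (C * (r - s)) ^ 2)) ∂μ := by
        rw [← Real.norm_eq_abs]
        refine norm_integral_le_of_norm_le (hN2.add hZ2) ?_
        filter_upwards [hκ] with ω hω using abs_mul_sub_le hε hω
    _ = _ := by
        rw [integral_add hN2 hZ2, integral_const_mul, integral_const_mul,
          integral_add (hZ.integrable_sq hHr) (integrable_const _)]
        simp

lemma abs_integral_mul_compIncr_le_sum (h : IsJumpIntensity μ H G σ Z κ C T) (ht : 0 ≤ t)
    (htT : t ≤ T) (hξ : BddMeas μ (H T) K ξ) (hε : 0 < ε) (n : ℕ) :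
    |∫ ω, ξ ω * compIncr σ κ 0 t ω ∂μ| ≤ ε * K ^ 2 + 1 / (2 * ε) *
      (∑ i ∈ Finset.range (n + 1),
          ∫ ω, (Z (uniformGrid 0 t n i) ω - Z (uniformGrid 0 t n (i + 1)) ω) ^ 2 ∂μ +
        C ^ 2 * t * (t / (n + 1))) := by
  set g := uniformGrid 0 t n
  set q : ℕ → ℝ := fun i => ∫ ω, (μ[ξ | H (g i)]) ω ^ 2 ∂μ
  have hξi := hξ.integrable (h.usualConditions.le T)
  have hg0 (i : ℕ) : 0 ≤ g i := le_uniformGrid ht n i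
  have hg (i : ℕ) : g i ≤ g (i + 1) := monotone_uniformGrid ht n (Nat.le_succ i)
  have hdecomp : ∫ ω, ξ ω * compIncr σ κ 0 t ω ∂μ =
      ∑ i ∈ Finset.range (n + 1), ∫ ω, ξ ω * compIncr σ κ (g i) (g (i + 1)) ω ∂μ := by
    rw [← integral_finsetSum _ fun i _ =>
      (h.bddMeas_compIncr (hg0 i) (hg i)).integrable_mul le_rfl hξi]
    simp only [h.compIncr_eq_sub (hg0 _) (hg _), ← Finset.mul_sum]
    simp only [Finset.sum_range_sub', g, uniformGrid_zero, uniformGrid_last,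
      h.compIncr_eq_sub le_rfl ht]
  have hq : q (n + 1) ≤ K ^ 2 := by
    have hN : BddMeas μ (H (g (n + 1))) K (μ[ξ | H (g (n + 1))]) := hξ.condExp
    have := integral_mono_ae (hN.integrable_sq (h.usualConditions.le _))
      (integrable_const (K ^ 2)) (hN.2.mono fun ω hω => sq_le_sq' (abs_le.1 hω).1 (abs_le.1 hω).2)
    simpa using this
  have hq0 : 0 ≤ q 0 := integral_nonneg fun ω => sq_nonneg _
  have hstep (i : ℕ) (hi : i ∈ Finset.range (n + 1)) := h.abs_integral_mul_compIncr_le (hg0 i)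
    (hg i) ((uniformGrid_le ht (Finset.mem_range.1 hi)).trans htT) hξ hε
  rw [hdecomp]
  refine (Finset.abs_sum_le_sum_abs _ _).trans ((Finset.sum_le_sum hstep).trans ?_)
  rw [Finset.sum_add_distrib, ← Finset.mul_sum, ← Finset.mul_sum, Finset.sum_add_distrib,
    Finset.sum_range_sub q]
  simp only [g, uniformGrid_succ_sub, sub_zero, Finset.sum_const, Finset.card_range, nsmul_eq_mul]
  refine add_le_add (mul_le_mul_of_nonneg_left (by linarith) hε.le) (le_of_eq ?_)
  push_cast
  field_simp

lemma tendsto_sum_integral_sq_azema (h : IsJumpIntensity μ H G σ Z κ C T) (ht : 0 ≤ t) :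
    Tendsto (fun n : ℕ => ∑ i ∈ Finset.range (n + 1),
      ∫ ω, (Z (uniformGrid 0 t n i) ω - Z (uniformGrid 0 t n (i + 1)) ω) ^ 2 ∂μ) atTop
      (𝓝 0) := by
  have hg0 (n i : ℕ) : 0 ≤ uniformGrid 0 t n i := le_uniformGrid ht n i
  have hg (n i : ℕ) := monotone_uniformGrid ht n (Nat.le_succ i)
  have hZ1 : ∀ᵐ ω ∂μ, ∀ n i, |Z (uniformGrid 0 t n i) ω| ≤ 1 :=
    ae_all_iff.2 fun n => ae_all_iff.2 fun i => (h.bddMeas_azema (hg0 n i) le_rfl).2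
  have hanti : ∀ᵐ ω ∂μ, ∀ n, Antitone fun i => Z (uniformGrid 0 t n i) ω := by
    have hstep := ae_all_iff.2 fun n => ae_all_iff.2 fun i => h.azema_ae_le (hg0 n i) (hg n i)
    filter_upwards [hstep] with ω hω n using antitone_nat_of_succ_le (hω n)
  have hint (n i : ℕ) : Integrable (fun ω =>
      (Z (uniformGrid 0 t n i) ω - Z (uniformGrid 0 t n (i + 1)) ω) ^ 2) μ :=
    ((h.bddMeas_azema (hg0 n i) (hg n i)).sub
      (h.bddMeas_azema (hg0 n (i + 1)) le_rfl)).integrable_sq (h.usualConditions.le _)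
  have hlim := tendsto_integral_of_dominated_convergence (μ := μ)
    (F := fun n : ℕ => fun ω => ∑ i ∈ Finset.range (n + 1),
      (Z (uniformGrid 0 t n i) ω - Z (uniformGrid 0 t n (i + 1)) ω) ^ 2) (f := fun _ => (0 : ℝ))
    (fun _ => 2 * 2) (fun n => (integrable_finsetSum _ fun i _ => hint n i).1)
    (integrable_const _) (fun n => ?_) ?_
  · rw [integral_zero] at hlim
    exact hlim.congr fun n => integral_finsetSum _ fun i _ => hint n i
  · filter_upwards [hZ1, hanti] with ω hω1 hω
    have hbd (i j : ℕ) : Z (uniformGrid 0 t n i) ω - Z (uniformGrid 0 t n j) ω ≤ 2 := by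
      linarith [(abs_le.1 (hω1 n i)).2, (abs_le.1 (hω1 n j)).1]
    rw [Real.norm_of_nonneg (Finset.sum_nonneg fun i _ => sq_nonneg _)]
    exact (sum_sq_sub_le (hω n) fun i _ => hbd i (i + 1)).trans
      (mul_le_mul_of_nonneg_left (hbd 0 (n + 1)) zero_le_two)
  · filter_upwards [hanti] with ω hω using
      tendsto_sum_sq_sub_uniformGrid (f := fun u => Z u ω) (h.continuous_azema ω) ht hω

theorem integral_mul_compIncr_eq_zero (h : IsJumpIntensity μ H G σ Z κ C T)
    (hξ : BddMeas μ (H T) K ξ) (ht : 0 ≤ t) (htT : t ≤ T) :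
    ∫ ω, ξ ω * compIncr σ κ 0 t ω ∂μ = 0 := by
  have hbound (ε : ℝ) (hε : 0 < ε) : |∫ ω, ξ ω * compIncr σ κ 0 t ω ∂μ| ≤ ε * K ^ 2 := by
    have hlim := (((h.tendsto_sum_integral_sq_azema ht).add
      ((tendsto_uniformGrid_mesh t).const_mul (C ^ 2 * t))).const_mul (1 / (2 * ε))).const_add
        (ε * K ^ 2)
    simp only [mul_zero, add_zero] at hlim
    exact ge_of_tendsto' hlim (h.abs_integral_mul_compIncr_le_sum ht htT hξ hε)
  have hlim : Tendsto (fun ε : ℝ => ε * K ^ 2) (𝓝[>] 0) (𝓝 0) := by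
    simpa using ((tendsto_id (x := 𝓝 (0 : ℝ))).mul_const (K ^ 2)).mono_left nhdsWithin_le_nhds
  exact abs_nonpos_iff.1
    (ge_of_tendsto hlim (by filter_upwards [self_mem_nhdsWithin] with ε hε using hbound ε hε))

end IsJumpIntensity

/-- The jump times of `ω` satisfy `0 = τ 0 < τ 1 < ⋯` and do not accumulate. -/
structure IsJumpPath (τ : ℕ → Ω → ℝ) (ω : Ω) : Prop where
  zero : τ 0 ω = 0
  strictMono : StrictMono fun k => τ k ω
  tendsto_atTop : Tendsto (fun k => τ k ω) atTop atTop

namespace IsJumpPath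

variable {τ : ℕ → Ω → ℝ} {ω : Ω} {s t : ℝ}

lemma le_card_iff (h : IsJumpPath τ ω) {S : Set ℝ} (hS : IsLowerSet S) (hb : BddAbove S)
    (h0 : 0 ∈ S) (k : ℕ) : k ≤ Nat.card {j : ℕ // τ (j + 1) ω ∈ S} ↔ τ k ω ∈ S := by
  classical
  have hex : ∃ n, τ (n + 1) ω ∉ S := by
    obtain ⟨M, hM⟩ := hb
    obtain ⟨n, hn⟩ := (h.tendsto_atTop.eventually_gt_atTop M).exists
    exact ⟨n, fun hc => (hn.trans_le (h.strictMono.monotone (Nat.le_succ n))).not_ge (hM hc)⟩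
  have hmem (j : ℕ) : τ (j + 1) ω ∈ S ↔ j < Nat.find hex := by
    refine ⟨fun hj => ?_, fun hj => not_not.1 (Nat.find_min hex hj)⟩
    by_contra! hc
    exact Nat.find_spec hex (hS (h.strictMono.monotone (Nat.succ_le_succ hc)) hj)
  have hcard : Nat.card {j : ℕ // τ (j + 1) ω ∈ S} = Nat.find hex := by
    rw [Nat.card_congr ((Equiv.subtypeEquivRight hmem).trans Fin.equivSubtype.symm), Nat.card_fin]
  rw [hcard]
  cases k with
  | zero => exact iff_of_true (Nat.zero_le _) (h.zero.symm ▸ h0)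
  | succ k => rw [hmem, Nat.succ_le_iff]

lemma le_countX_iff (h : IsJumpPath τ ω) (ht : 0 ≤ t) (k : ℕ) : k ≤ countX τ t ω ↔ τ k ω ≤ t :=
  h.le_card_iff (isLowerSet_Iic t) bddAbove_Iic ht k

lemma le_countXminus_iff (h : IsJumpPath τ ω) (ht : 0 < t) (k : ℕ) :
    k ≤ countXminus τ t ω ↔ τ k ω < t :=
  h.le_card_iff (isLowerSet_Iio t) bddAbove_Iio ht k

lemma countX_eq_iff (h : IsJumpPath τ ω) (ht : 0 ≤ t) (k : ℕ) :
    countX τ t ω = k ↔ τ k ω ≤ t ∧ t < τ (k + 1) ω := by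
  rw [← h.le_countX_iff ht, ← not_le, ← h.le_countX_iff ht]
  omega

lemma countXminus_eq_iff (h : IsJumpPath τ ω) (ht : 0 < t) (k : ℕ) :
    countXminus τ t ω = k ↔ τ k ω < t ∧ t ≤ τ (k + 1) ω := by
  rw [← h.le_countXminus_iff ht, ← not_lt (a := τ (k + 1) ω), ← h.le_countXminus_iff ht]
  omega

lemma countX_mono (h : IsJumpPath τ ω) (hs : 0 ≤ s) (hst : s ≤ t) :
    countX τ s ω ≤ countX τ t ω :=
  (h.le_countX_iff (hs.trans hst) _).2 (((h.le_countX_iff hs _).1 le_rfl).trans hst)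

lemma nonneg (h : IsJumpPath τ ω) (k : ℕ) : 0 ≤ τ k ω := by
  simpa only [h.zero] using h.strictMono.monotone (Nat.zero_le k)

-- The primitive of `f` is continuous at the first jump after `t`, the counting path is not.
lemma exists_rat_countX_sub_integral_ne_zero (h : IsJumpPath τ ω) (f : ℝ → ℝ) (ht : 0 ≤ t) :
    ∃ q : ℚ, t ≤ q ∧ (countX τ q ω : ℝ) - ∫ s in Ioc 0 (q : ℝ), f s ≠ 0 := by
  by_contra! hf
  obtain ⟨k, hk⟩ := (h.tendsto_atTop.eventually_gt_atTop t).exists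
  obtain ⟨R, hR⟩ := exists_rat_gt (τ k ω)
  have hk0 : 0 < k := Nat.pos_of_ne_zero fun hc => by
    rw [hc, h.zero] at hk
    exact hk.not_ge ht
  have hint : IntegrableOn f (Icc 0 (R : ℝ)) := by
    rw [integrableOn_Icc_iff_integrableOn_Ioc]
    by_contra hn
    have hX := hf R (hk.trans hR).le
    rw [integral_undef hn, sub_zero, Nat.cast_eq_zero] at hX
    exact (hk0.trans_le ((h.le_countX_iff ((h.nonneg k).trans hR.le) k).2 hR.le)).ne' hX
  have hcont : ContinuousAt (fun x => ∫ s in Ioc 0 x, f s) (τ k ω) :=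
    (intervalIntegral.continuousOn_primitive hint).continuousAt
      (Icc_mem_nhds (ht.trans_lt hk) hR)
  have hnear := hcont.eventually (Metric.ball_mem_nhds _ (half_pos one_pos))
  obtain ⟨a, b, hab, hsub⟩ :=
    mem_nhds_iff_exists_Ioo_subset.1 (hnear.and (lt_mem_nhds hk))
  obtain ⟨p, hap, hp⟩ := exists_rat_btwn hab.1
  obtain ⟨q, hq, hqb⟩ := exists_rat_btwn hab.2
  obtain ⟨hpI, hpt⟩ := hsub ⟨hap, hp.trans hab.2⟩
  obtain ⟨hqI, hqt⟩ := hsub ⟨hab.1.trans hq, hqb⟩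
  have hpX : countX τ p ω + 1 ≤ k :=
    not_le.1 fun hc => hp.not_ge ((h.le_countX_iff (ht.trans hpt.le) k).1 hc)
  have hqX : k ≤ countX τ q ω := (h.le_countX_iff (ht.trans hqt.le) k).2 hq.le
  have hjump : (countX τ p ω : ℝ) + 1 ≤ countX τ q ω := mod_cast hpX.trans hqX
  rw [Real.dist_eq] at hpI hqI
  linarith [(abs_lt.1 hpI).1, (abs_lt.1 hqI).2, hf p hpt.le, hf q hqt.le]

end IsJumpPath

section Filtrations

variable {m0 : MeasurableSpace Ω} {μ : Measure Ω} {F A : ℝ → MeasurableSpace Ω}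
  {τ : ℕ → Ω → ℝ} {s t : ℝ}

lemma monotone_rcReg (F : ℝ → MeasurableSpace Ω) : Monotone (rcReg F) :=
  fun _ _ hst => biInf_mono fun _ hx => lt_of_le_of_lt hst hx

lemma rcReg_rcReg (F : ℝ → MeasurableSpace Ω) (t : ℝ) : rcReg (rcReg F) t = rcReg F t := by
  refine le_antisymm (le_iInf₂ fun s hs => ?_) (le_iInf₂ fun s hs => monotone_rcReg F (le_of_lt hs))
  obtain ⟨r, hr, hrs⟩ := exists_between (mem_Ioi.1 hs)
  exact (iInf₂_le r hr).trans (iInf₂_le s hrs)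

lemma sup_le_rcReg_sup (hF : ∀ s t : ℝ, 0 ≤ s → s ≤ t → F s ≤ F t) (hA : Monotone A)
    (ht : 0 ≤ t) : F t ⊔ A t ≤ rcReg (fun t => F t ⊔ A t) t :=
  le_iInf₂ fun s hs => sup_le_sup (hF t s ht (le_of_lt hs)) (hA (le_of_lt hs))

lemma usualConditions_rcReg (hle : ∀ t, 0 ≤ t → rcReg F t ≤ m0)
    (hnull : ∀ s, μ s = 0 → MeasurableSet[rcReg F 0] s) : UsualConditions μ (rcReg F) :=
  ⟨⟨fun _ _ _ hst => monotone_rcReg F hst, fun t =>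
      (monotone_rcReg F (le_max_left t 0)).trans (hle _ (le_max_right t 0))⟩,
    fun t _ => (rcReg_rcReg F t).symm, hnull⟩

lemma UsualConditions.measurableSet_of_ae_iff (hF : UsualConditions μ F) (ht : 0 ≤ t)
    {B D : Set Ω} (hD : MeasurableSet[F t] D) (h : ∀ᵐ ω ∂μ, ω ∈ B ↔ ω ∈ D) :
    MeasurableSet[F t] B := by
  have hnull {N : Set Ω} (hN : N ⊆ {ω | ¬(ω ∈ B ↔ ω ∈ D)}) : MeasurableSet[F t] N :=
    hF.mono le_rfl ht _ (hF.2.2 N (measure_mono_null hN h))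
  have hBD : B = (D \ (D \ B)) ∪ (B \ D) := by
    ext ω
    simp only [mem_union, Set.mem_sdiff]
    tauto
  rw [hBD]
  exact (hD.diff (hnull fun ω hω hc => hω.2 (hc.2 hω.1))).union
    (hnull fun ω hω hc => hω.2 (hc.1 hω.1))

lemma monotone_natFilt (Y : ℝ → Ω → ℝ) : Monotone (natFilt Y) :=
  fun _ _ hst => biSup_mono fun _ hx => ⟨hx.1, hx.2.trans hst⟩

lemma measurableSet_natFilt_le (σ : Ω → ℝ) (hs : 0 ≤ s) :
    MeasurableSet[natFilt (fun s ω => if σ ω ≤ s then (1 : ℝ) else 0) s] {ω | σ ω ≤ s} := by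
  have hle := le_iSup₂ (f := fun r (_ : r ∈ Icc 0 s) => MeasurableSpace.comap
    (fun ω => if σ ω ≤ r then (1 : ℝ) else 0) inferInstance) s ⟨hs, le_rfl⟩
  refine hle _ ⟨{1}, measurableSet_singleton _, ?_⟩
  ext ω
  by_cases h : σ ω ≤ s <;> simp [h]

lemma sup_le_jumpFilt (hF : ∀ s t : ℝ, 0 ≤ s → s ≤ t → F s ≤ F t) (k : ℕ) (ht : 0 ≤ t) :
    F t ⊔ ⨆ i ∈ Finset.range k, natFilt (fun s ω => if τ (i + 1) ω ≤ s then (1 : ℝ) else 0) t ≤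
      jumpFilt F τ k t :=
  sup_le_rcReg_sup hF (A := fun t => ⨆ i ∈ Finset.range k,
      natFilt (fun s ω => if τ (i + 1) ω ≤ s then (1 : ℝ) else 0) t)
    (fun _ _ hst => iSup₂_mono fun _ _ => monotone_natFilt _ hst) ht

lemma sup_le_jumpFiltInf (hF : ∀ s t : ℝ, 0 ≤ s → s ≤ t → F s ≤ F t) (ht : 0 ≤ t) :
    F t ⊔ ⨆ i : ℕ, natFilt (fun s ω => if τ (i + 1) ω ≤ s then (1 : ℝ) else 0) t ≤
      jumpFiltInf F τ t :=
  sup_le_rcReg_sup hF (A := fun t => ⨆ i : ℕ,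
      natFilt (fun s ω => if τ (i + 1) ω ≤ s then (1 : ℝ) else 0) t)
    (fun _ _ hst => iSup_mono fun _ => monotone_natFilt _ hst) ht

end Filtrations

namespace InversionSetting

variable {m0 : MeasurableSpace Ω} {μ : Measure Ω} {F : ℝ → MeasurableSpace Ω}
  {η : ℝ → Ω → ℝ} {lam : ℝ → ℕ → ℝ} {τ : ℕ → Ω → ℝ} {t : ℝ}

lemma ae_isJumpPath (h : InversionSetting μ F η lam τ) : ∀ᵐ ω ∂μ, IsJumpPath τ ω := by
  filter_upwards [h.2.1] with ω hω
  exact ⟨h.1 ω, hω.2.1, hω.2.2⟩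

-- If `G t` were not a sub-σ-algebra, conditional expectations on `G q`, `q ≥ t`, would be zero by
-- convention, and the martingale hypothesis would make the compensated count vanish from `t` on.
lemma jumpFiltInf_le [NeZero μ] (h : InversionSetting μ F η lam τ) (ht : 0 ≤ t) :
    jumpFiltInf F τ t ≤ m0 := by
  by_contra hn
  have hzero : ∀ᵐ ω ∂μ, ∀ q : ℚ, t ≤ q → (countX τ q ω : ℝ) - ∫ s in Ioc 0 (q : ℝ), η s ω /
      (μ[η s | MeasurableSpace.comap (countXminus τ s) inferInstance]) ω *
        lam s (countXminus τ s ω) = 0 := by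
    refine ae_all_iff.2 fun q => ?_
    by_cases hq : t ≤ (q : ℝ)
    · have hM := h.2.2.2.2.2.2.2 q q (ht.trans hq) le_rfl
      have hnq : ¬jumpFiltInf F τ q ≤ m0 := fun hc => hn ((monotone_rcReg _ hq).trans hc)
      rw [condExp_of_not_le hnq] at hM
      filter_upwards [hM] with ω hω _ using hω.symm
    · exact Eventually.of_forall fun ω hc => absurd hc hq
  obtain ⟨ω, hω, hpath⟩ := (hzero.and h.ae_isJumpPath).exists
  obtain ⟨q, hq, hne⟩ := hpath.exists_rat_countX_sub_integral_ne_zero _ ht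
  exact hne (hω q hq)

end InversionSetting

/-- The part of `InversionSetting` that does not involve the intensity: `τ` enumerates the jump
times of a counting process, and the filtrations it generates over `F` are complete,
right-continuous and form an immersion chain. -/
structure IsJumpSequence {_ : MeasurableSpace Ω} (μ : Measure Ω) (F : ℝ → MeasurableSpace Ω)
    (τ : ℕ → Ω → ℝ) : Prop where
  filtration_mono : ∀ s t : ℝ, 0 ≤ s → s ≤ t → F s ≤ F t
  ae_isJumpPath : ∀ᵐ ω ∂μ, IsJumpPath τ ω
  usualConditions_jumpFilt : ∀ k, UsualConditions μ (jumpFilt F τ k)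
  usualConditions_jumpFiltInf : UsualConditions μ (jumpFiltInf F τ)
  immersed : ∀ k : ℕ, Immersed μ (jumpFilt F τ k) (jumpFiltInf F τ)

lemma InversionSetting.isJumpSequence {_ : MeasurableSpace Ω} {μ : Measure Ω} [NeZero μ]
    {F : ℝ → MeasurableSpace Ω} {η : ℝ → Ω → ℝ} {lam : ℝ → ℕ → ℝ} {τ : ℕ → Ω → ℝ}
    (h : InversionSetting μ F η lam τ) (hF : ∀ s t : ℝ, 0 ≤ s → s ≤ t → F s ≤ F t)
    (hnull : ∀ s : Set Ω, μ s = 0 → MeasurableSet[F 0] s) : IsJumpSequence μ F τ where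
  filtration_mono := hF
  ae_isJumpPath := h.ae_isJumpPath
  usualConditions_jumpFilt k := usualConditions_rcReg
    (fun t ht => ((h.2.2.2.1 k).1 t ht).trans (h.jumpFiltInf_le ht))
    fun s hs => (le_sup_left.trans (sup_le_jumpFilt hF k le_rfl)) _ (hnull s hs)
  usualConditions_jumpFiltInf := usualConditions_rcReg (fun _ ht => h.jumpFiltInf_le ht)
    fun s hs => (le_sup_left.trans (sup_le_jumpFiltInf hF le_rfl)) _ (hnull s hs)
  immersed := h.2.2.2.1

namespace IsJumpSequence

variable {m0 : MeasurableSpace Ω} {μ : Measure Ω} {F : ℝ → MeasurableSpace Ω}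
  {τ : ℕ → Ω → ℝ} {s t : ℝ}

lemma measurableSet_jumpFilt_le (h : IsJumpSequence μ F τ) {j k : ℕ} (hj : j ≤ k) (hs : 0 ≤ s) :
    MeasurableSet[jumpFilt F τ k s] {ω | τ j ω ≤ s} := by
  cases j with
  | zero =>
    refine (h.usualConditions_jumpFilt k).measurableSet_of_ae_iff hs MeasurableSet.univ ?_
    filter_upwards [h.ae_isJumpPath] with ω hω
    simp [hω.zero, hs]
  | succ j =>
    have hle := le_iSup₂ (f := fun i (_ : i ∈ Finset.range k) =>
      natFilt (fun s ω => if τ (i + 1) ω ≤ s then (1 : ℝ) else 0) s) j (Finset.mem_range.2 hj)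
    exact (hle.trans (le_sup_right.trans (sup_le_jumpFilt h.filtration_mono k hs))) _
      (measurableSet_natFilt_le _ hs)

lemma measurableSet_le (h : IsJumpSequence μ F τ) (k : ℕ) (hs : 0 ≤ s) :
    MeasurableSet[jumpFiltInf F τ s] {ω | τ k ω ≤ s} :=
  (h.immersed k).1 s hs _ (h.measurableSet_jumpFilt_le le_rfl hs)

lemma measurable (h : IsJumpSequence μ F τ) (k : ℕ) : Measurable (τ k) := by
  have hG := h.usualConditions_jumpFiltInf
  refine measurable_of_Iic fun x => ?_
  by_cases hx : 0 ≤ x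
  · exact hG.le x _ (h.measurableSet_le k hx)
  · refine hG.le 0 _ (hG.measurableSet_of_ae_iff le_rfl (D := ∅) (by simp) ?_)
    filter_upwards [h.ae_isJumpPath] with ω hω
    simpa using (not_le.1 hx).trans_le (hω.nonneg k)

lemma measurableSet_lt (h : IsJumpSequence μ F τ) (k : ℕ) (hs : 0 < s) :
    MeasurableSet[jumpFiltInf F τ s] {ω | τ k ω < s} := by
  obtain ⟨u, -, hu, hlim⟩ := exists_seq_strictMono_tendsto' hs
  have hunion : {ω | τ k ω < s} = ⋃ n, {ω | τ k ω ≤ u n} := by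
    ext ω
    simp only [mem_ofPred_eq, mem_iUnion]
    exact ⟨fun hω => ((hlim.eventually (lt_mem_nhds hω)).exists).imp fun _ hn => hn.le,
      fun ⟨n, hn⟩ => hn.trans_lt (hu n).2⟩
  rw [hunion]
  exact MeasurableSet.iUnion fun n => h.usualConditions_jumpFiltInf.mono (hu n).1.le (hu n).2.le _
    (h.measurableSet_le k (hu n).1.le)

lemma measurableSet_countX_eq (h : IsJumpSequence μ F τ) (hs : 0 ≤ s) (k : ℕ) :
    MeasurableSet[jumpFiltInf F τ s] {ω | countX τ s ω = k} := by
  refine h.usualConditions_jumpFiltInf.measurableSet_of_ae_iff hs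
    ((h.measurableSet_le k hs).diff (h.measurableSet_le (k + 1) hs)) ?_
  filter_upwards [h.ae_isJumpPath] with ω hω
  simp only [mem_ofPred_eq, Set.mem_sdiff, hω.countX_eq_iff hs, not_le]

lemma measurable_countX (h : IsJumpSequence μ F τ) (hs : 0 ≤ s) : Measurable (countX τ s) :=
  measurable_to_countable' fun k =>
    h.usualConditions_jumpFiltInf.le s _ (h.measurableSet_countX_eq hs k)

lemma measurable_countXminus (h : IsJumpSequence μ F τ) (hs : 0 < s) :
    Measurable (countXminus τ s) := by
  have hG := h.usualConditions_jumpFiltInf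
  refine measurable_to_countable' fun k => hG.le s _ (hG.measurableSet_of_ae_iff hs.le
    ((h.measurableSet_lt k hs).diff (h.measurableSet_lt (k + 1) hs)) ?_)
  filter_upwards [h.ae_isJumpPath] with ω hω
  simp only [mem_preimage, mem_singleton_iff, mem_ofPred_eq, Set.mem_sdiff,
    hω.countXminus_eq_iff hs, not_lt]

end IsJumpSequence

section Clamping

variable {L U Λ T : ℝ} (hLU : L ≤ U) (hT : 0 ≤ T) {F : ℝ → MeasurableSpace Ω}

/-- The process `η` clamped to the time interval `[0, T]` and to the value interval `[L, U]`; unlike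
`η`, it is bounded and jointly measurable without exceptional sets. -/
def clampedProcess (η : ℝ → Ω → ℝ) (s : ℝ) (ω : Ω) : ℝ :=
  projIcc L U hLU (η (projIcc 0 T hT s) ω)

/-- The rate function `lam` clamped to the value interval `[0, Λ]`. -/
def clampedRate (hΛ : 0 ≤ Λ) (lam : ℝ → ℕ → ℝ) (s : ℝ) (k : ℕ) : ℝ :=
  projIcc 0 Λ hΛ (lam s k)

variable {hLU hT} {η : ℝ → Ω → ℝ}

lemma clampedProcess_eq {s : ℝ} (hs : s ∈ Icc 0 T) {ω : Ω} (hη : η s ω ∈ Icc L U) :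
    clampedProcess hLU hT η s ω = η s ω := by
  simp only [clampedProcess, projIcc_of_mem hT hs, projIcc_of_mem hLU hη]

lemma ProgMeas.measurable_uncurry_clampedProcess (h : ProgMeas F η) :
    Measurable[MeasurableSpace.prod inferInstance (F T)]
      (Function.uncurry (clampedProcess hLU hT η)) := by
  have hηT := h T hT
  let : MeasurableSpace Ω := F T
  have hclamp : Measurable (fun p : ℝ × Ω => (projIcc 0 T hT p.1, p.2)) :=
    (continuous_projIcc.measurable.comp measurable_fst).prodMk measurable_snd
  exact (measurable_subtype_coe.comp continuous_projIcc.measurable).comp (hηT.comp hclamp)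

lemma ProgMeas.measurable_clampedProcess (h : ProgMeas F η) {s : ℝ} (hs : s ∈ Icc 0 T) :
    Measurable[F s] (clampedProcess hLU hT η s) := by
  have hηs := h s hs.1
  let : MeasurableSpace Ω := F s
  have hsection : Measurable (fun ω : Ω => ((⟨s, hs.1, le_rfl⟩ : Icc (0 : ℝ) s), ω)) :=
    measurable_const.prodMk measurable_id
  have hmeas := (measurable_subtype_coe.comp (continuous_projIcc (h := hLU)).measurable).comp
    (hηs.comp hsection)
  convert hmeas using 1
  ext ω
  simp only [clampedProcess, projIcc_of_mem hT hs, Function.comp_apply]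

end Clamping

section Intensity

/-- The indicator of the event that the process with jump times `τ` is in state `k` just before
time `u`. -/
def interJump (τ : ℕ → Ω → ℝ) (k : ℕ) (u : ℝ) (ω : Ω) : ℝ :=
  (Ioc (τ k ω) (τ (k + 1) ω)).indicator 1 u

variable {m0 : MeasurableSpace Ω} (μ : Measure Ω) (τ : ℕ → Ω → ℝ) (e : ℝ → Ω → ℝ)
  (l : ℝ → ℕ → ℝ)

/-- `P(X_{u-} = k)`. -/
def stateProb (k : ℕ) (u : ℝ) : ℝ := ∫ ω, interJump τ k u ω ∂μ

/-- `E[e_u; X_{u-} = k]`. -/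
def stateMean (k : ℕ) (u : ℝ) : ℝ := ∫ ω, interJump τ k u ω * e u ω ∂μ

/-- `λ(u, k) / E[e_u | X_{u-} = k]`, the factor multiplying `e_u` in the intensity when
`X_{u-} = k`; it is `0` if `P(X_{u-} = k) = 0`. -/
def rateFactor (k : ℕ) (u : ℝ) : ℝ := l u k * (stateProb μ τ k u / stateMean μ τ e k u)

/-- The intensity of the `(k + 1)`-st jump. -/
def jumpIntensity (k : ℕ) (u : ℝ) (ω : Ω) : ℝ :=
  interJump τ k u ω * e u ω * rateFactor μ τ e l k u

/-- The intensity of the counting process. -/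
def totalIntensity (u : ℝ) (ω : Ω) : ℝ :=
  e u ω * rateFactor μ τ e l (countXminus τ u ω) u

/-- Data for which the intensities are bounded and measurable everywhere: a process `e` with values
in `[L, U]`, `0 < L`, adapted to `F` on `[0, T]`, and a rate function `l` with values in
`[0, Λ]`. -/
structure IsRateData (m0 : MeasurableSpace Ω) (F : ℝ → MeasurableSpace Ω) (L U Λ T : ℝ)
    (e : ℝ → Ω → ℝ) (l : ℝ → ℕ → ℝ) : Prop where
  L_pos : 0 < L
  measurable_uncurry : Measurable (Function.uncurry e)
  adapted : ∀ s ∈ Icc 0 T, Measurable[F s] (e s)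
  mem_Icc : ∀ s ω, e s ω ∈ Icc L U
  measurable_rate : ∀ k, Measurable fun s => l s k
  rate_mem_Icc : ∀ s k, l s k ∈ Icc 0 Λ

variable {μ τ e l} {F : ℝ → MeasurableSpace Ω} {L U Λ T : ℝ}

lemma interJump_nonneg (k : ℕ) (u : ℝ) (ω : Ω) : 0 ≤ interJump τ k u ω :=
  indicator_nonneg (fun _ _ => zero_le_one) u

lemma interJump_le_one (k : ℕ) (u : ℝ) (ω : Ω) : interJump τ k u ω ≤ 1 :=
  indicator_le_self' (fun _ _ => zero_le_one) u

lemma measurable_uncurry_interJump (hτ : ∀ k, Measurable (τ k)) (k : ℕ) :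
    Measurable (Function.uncurry (interJump τ k)) :=
  measurable_const.indicator (s := {p : ℝ × Ω | p.1 ∈ Ioc (τ k p.2) (τ (k + 1) p.2)})
    ((measurableSet_lt ((hτ k).comp measurable_snd) measurable_fst).inter
      (measurableSet_le measurable_fst ((hτ (k + 1)).comp measurable_snd)))

lemma integrable_interJump [IsFiniteMeasure μ] (hτ : ∀ k, Measurable (τ k)) (k : ℕ) (u : ℝ) :
    Integrable (interJump τ k u) μ :=
  Integrable.of_bound (C := 1)
    ((measurable_uncurry_interJump hτ k).comp measurable_prodMk_left).aestronglyMeasurable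
    (Eventually.of_forall fun ω => by
      rw [Real.norm_of_nonneg (interJump_nonneg k u ω)]
      exact interJump_le_one k u ω)

lemma stateProb_nonneg (k : ℕ) (u : ℝ) : 0 ≤ stateProb μ τ k u :=
  integral_nonneg fun ω => interJump_nonneg k u ω

lemma measurable_stateProb [SFinite μ] (hτ : ∀ k, Measurable (τ k)) (k : ℕ) :
    Measurable (stateProb μ τ k) :=
  ((measurable_uncurry_interJump hτ k).stronglyMeasurable.integral_prod_right).measurable

lemma IsJumpPath.interJump_eq {ω : Ω} (h : IsJumpPath τ ω) (k : ℕ) {u : ℝ} (hu : 0 < u) :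
    interJump τ k u ω = (countXminus τ u ⁻¹' {k}).indicator 1 ω :=
  indicator_eq_indicator ((h.countXminus_eq_iff hu k).symm) rfl

lemma IsJumpPath.jumpIntensity_eq {ω : Ω} (h : IsJumpPath τ ω) (k : ℕ) {u : ℝ} (hu : 0 < u) :
    jumpIntensity μ τ e l k u ω =
      (Ioc (τ k ω) (τ (k + 1) ω)).indicator (totalIntensity μ τ e l · ω) u := by
  by_cases hmem : u ∈ Ioc (τ k ω) (τ (k + 1) ω)
  · rw [indicator_of_mem hmem, totalIntensity, (h.countXminus_eq_iff hu k).2 hmem, jumpIntensity,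
      interJump, indicator_of_mem hmem, Pi.one_apply, one_mul]
  · rw [indicator_of_notMem hmem, jumpIntensity, interJump, indicator_of_notMem hmem, zero_mul,
      zero_mul]

namespace IsRateData

lemma measurable (h : IsRateData m0 F L U Λ T e l) (u : ℝ) : Measurable (e u) :=
  h.measurable_uncurry.comp measurable_prodMk_left

lemma nonneg (h : IsRateData m0 F L U Λ T e l) (u : ℝ) (ω : Ω) : 0 ≤ e u ω :=
  h.L_pos.le.trans (h.mem_Icc u ω).1

lemma abs_le (h : IsRateData m0 F L U Λ T e l) (u : ℝ) (ω : Ω) : |e u ω| ≤ U := by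
  rw [abs_of_nonneg (h.nonneg u ω)]
  exact (h.mem_Icc u ω).2

lemma integrable [IsFiniteMeasure μ] (h : IsRateData m0 F L U Λ T e l) (u : ℝ) :
    Integrable (e u) μ :=
  Integrable.of_bound (h.measurable u).aestronglyMeasurable U
    (Eventually.of_forall (h.abs_le u))

lemma measurable_uncurry_interJump_mul (h : IsRateData m0 F L U Λ T e l)
    (hτ : ∀ k, Measurable (τ k)) (k : ℕ) :
    Measurable (Function.uncurry fun u ω => interJump τ k u ω * e u ω) :=
  (measurable_uncurry_interJump hτ k).mul h.measurable_uncurry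

lemma measurable_rateFactor [SFinite μ] (h : IsRateData m0 F L U Λ T e l)
    (hτ : ∀ k, Measurable (τ k)) (k : ℕ) : Measurable (rateFactor μ τ e l k) :=
  (h.measurable_rate k).mul ((measurable_stateProb hτ k).div
    ((h.measurable_uncurry_interJump_mul hτ k).stronglyMeasurable.integral_prod_right).measurable)

lemma measurable_uncurry_jumpIntensity [SFinite μ] (h : IsRateData m0 F L U Λ T e l)
    (hτ : ∀ k, Measurable (τ k)) (k : ℕ) :
    Measurable (Function.uncurry (jumpIntensity μ τ e l k)) :=
  (h.measurable_uncurry_interJump_mul hτ k).mul ((h.measurable_rateFactor hτ k).comp measurable_fst)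

lemma mul_stateProb_le_stateMean [IsFiniteMeasure μ] (h : IsRateData m0 F L U Λ T e l)
    (hτ : ∀ k, Measurable (τ k)) (k : ℕ) (u : ℝ) :
    L * stateProb μ τ k u ≤ stateMean μ τ e k u := by
  rw [stateProb, stateMean, ← integral_const_mul]
  refine integral_mono ((integrable_interJump hτ k u).const_mul _)
    ((integrable_interJump hτ k u).mul_bdd (h.measurable u).aestronglyMeasurable
      (Eventually.of_forall (h.abs_le u))) fun ω => ?_
  simp only [mul_comm L]
  exact mul_le_mul_of_nonneg_left (h.mem_Icc u ω).1 (interJump_nonneg k u ω)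

lemma rateFactor_mem_Icc [IsFiniteMeasure μ] (h : IsRateData m0 F L U Λ T e l)
    (hτ : ∀ k, Measurable (τ k)) (k : ℕ) (u : ℝ) :
    rateFactor μ τ e l k u ∈ Icc 0 (Λ * (1 / L)) := by
  have hmean := h.mul_stateProb_le_stateMean (μ := μ) hτ k u
  have hprob := stateProb_nonneg (μ := μ) (τ := τ) k u
  have hmean0 : 0 ≤ stateMean μ τ e k u := (mul_nonneg h.L_pos.le hprob).trans hmean
  have hratio0 : 0 ≤ stateProb μ τ k u / stateMean μ τ e k u := div_nonneg hprob hmean0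
  have hratio : stateProb μ τ k u / stateMean μ τ e k u ≤ 1 / L := by
    rw [le_div_iff₀ h.L_pos, div_mul_eq_mul_div, mul_comm]
    exact div_le_one_of_le₀ hmean hmean0
  have hl := h.rate_mem_Icc u k
  exact ⟨mul_nonneg hl.1 hratio0, mul_le_mul hl.2 hratio hratio0 (hl.1.trans hl.2)⟩

lemma totalIntensity_mem_Icc [IsFiniteMeasure μ] (h : IsRateData m0 F L U Λ T e l)
    (hτ : ∀ k, Measurable (τ k)) (u : ℝ) (ω : Ω) :
    totalIntensity μ τ e l u ω ∈ Icc 0 (U * (Λ * (1 / L))) := by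
  have hr := h.rateFactor_mem_Icc (μ := μ) hτ (countXminus τ u ω) u
  exact ⟨mul_nonneg (h.nonneg u ω) hr.1, mul_le_mul (h.mem_Icc u ω).2 hr.2 hr.1
    ((h.nonneg u ω).trans (h.mem_Icc u ω).2)⟩

lemma abs_jumpIntensity_le [IsFiniteMeasure μ] (h : IsRateData m0 F L U Λ T e l)
    (hτ : ∀ k, Measurable (τ k)) (k : ℕ) (u : ℝ) (ω : Ω) :
    |jumpIntensity μ τ e l k u ω| ≤ U * (Λ * (1 / L)) := by
  have hr := h.rateFactor_mem_Icc (μ := μ) hτ k u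
  have he : interJump τ k u ω * e u ω ≤ U := (mul_le_of_le_one_left (h.nonneg u ω)
    (interJump_le_one k u ω)).trans (h.mem_Icc u ω).2
  have he0 : 0 ≤ interJump τ k u ω * e u ω := mul_nonneg (interJump_nonneg k u ω) (h.nonneg u ω)
  rw [jumpIntensity, abs_of_nonneg (mul_nonneg he0 hr.1)]
  exact mul_le_mul he hr.2 hr.1 (he0.trans he)

lemma measurable_jumpIntensity (h : IsRateData m0 F L U Λ T e l) (hτ : IsJumpSequence μ F τ)
    (k : ℕ) {u : ℝ} (hu : 0 < u) (huT : u ≤ T) :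
    Measurable[jumpFiltInf F τ u] (jumpIntensity μ τ e l k u) := by
  have he : Measurable[jumpFiltInf F τ u] (e u) := (h.adapted u ⟨hu.le, huT⟩).mono
    (le_sup_left.trans (sup_le_jumpFiltInf hτ.filtration_mono hu.le)) le_rfl
  have hind : Measurable[jumpFiltInf F τ u] (interJump τ k u) := by
    refine Measurable.indicator (s := {ω | u ∈ Ioc (τ k ω) (τ (k + 1) ω)}) measurable_const ?_
    have hset := @MeasurableSet.diff _ (jumpFiltInf F τ u) _ _ (hτ.measurableSet_lt k hu)
      (hτ.measurableSet_lt (k + 1) hu)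
    convert hset using 1
    ext ω
    simp only [mem_Ioc, mem_ofPred_eq, Set.mem_sdiff, not_lt]
  exact (hind.mul he).mul_const _

lemma integrableOn_totalIntensity [IsFiniteMeasure μ] (h : IsRateData m0 F L U Λ T e l)
    (hτ : ∀ k, Measurable (τ k)) {ω : Ω} (hω : IsJumpPath τ ω) (t : ℝ) :
    IntegrableOn (totalIntensity μ τ e l · ω) (Ioc 0 t) := by
  have hmono : MonotoneOn (countXminus τ · ω) (Ioc 0 t) := fun r hr u hu hru =>
    (hω.le_countXminus_iff hu.1 _).2 (((hω.le_countXminus_iff hr.1 _).1 le_rfl).trans_le hru)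
  have hfactor : Measurable fun p : ℝ × ℕ => rateFactor μ τ e l p.2 p.1 :=
    measurable_from_prod_countable_left fun k => h.measurable_rateFactor hτ k
  have hmeas : AEMeasurable (totalIntensity μ τ e l · ω) (volume.restrict (Ioc 0 t)) :=
    (h.measurable_uncurry.comp measurable_prodMk_right).aemeasurable.mul <|
      hfactor.comp_aemeasurable <| aemeasurable_id.prodMk <|
        aemeasurable_restrict_of_monotoneOn measurableSet_Ioc hmono
  refine Integrable.of_bound hmeas.aestronglyMeasurable (U * (Λ * (1 / L)))
    (Eventually.of_forall fun u => ?_)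
  have hmem := h.totalIntensity_mem_Icc (μ := μ) hτ u ω
  rw [Real.norm_of_nonneg hmem.1]
  exact hmem.2

end IsRateData

lemma condExp_comap_eq_setIntegral_div [IsFiniteMeasure μ] {N : Ω → ℕ} (hN : Measurable N)
    {f : Ω → ℝ} (hf : Integrable f μ) {ω : Ω} (hp : μ.real (N ⁻¹' {N ω}) ≠ 0) :
    (μ[f | MeasurableSpace.comap N inferInstance]) ω =
      (∫ x in N ⁻¹' {N ω}, f x ∂μ) / μ.real (N ⁻¹' {N ω}) := by
  have hfactors := (stronglyMeasurable_condExp (μ := μ) (f := f)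
    (m := MeasurableSpace.comap N inferInstance)).measurable.factorsThrough
  rw [eq_div_iff hp, mul_comm, ← smul_eq_mul, ← setIntegral_const,
    ← setIntegral_condExp hN.comap_le hf ⟨{N ω}, measurableSet_singleton _, rfl⟩]
  exact setIntegral_congr_fun (hN (measurableSet_singleton _)) fun x hx => hfactors hx.symm

lemma ae_ae_stateProb_ne_zero [IsFiniteMeasure μ] (hτ : ∀ k, Measurable (τ k)) (k : ℕ)
    (ν : Measure ℝ) [SFinite ν] :
    ∀ᵐ ω ∂μ, ∀ᵐ u ∂ν, u ∈ Ioc (τ k ω) (τ (k + 1) ω) → stateProb μ τ k u ≠ 0 := by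
  have hset : MeasurableSet {p : Ω × ℝ |
      ¬(interJump τ k p.2 p.1 ≠ 0 ∧ stateProb μ τ k p.2 = 0)} :=
    .compl <| .inter
      (((measurable_uncurry_interJump hτ k).comp measurable_swap)
        (measurableSet_singleton 0).compl)
      (((measurable_stateProb hτ k).comp measurable_snd) (measurableSet_singleton 0))
  have hae : ∀ᵐ ω ∂μ, ∀ᵐ u ∂ν, ¬(interJump τ k u ω ≠ 0 ∧ stateProb μ τ k u = 0) := by
    refine (Measure.ae_ae_comm hset).2 (Eventually.of_forall fun u => ?_)
    by_cases hp : stateProb μ τ k u = 0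
    · filter_upwards [(integral_eq_zero_iff_of_nonneg (interJump_nonneg k u)
        (integrable_interJump hτ k u)).1 hp] with ω hω hne
      exact hne.1 hω
    · exact Eventually.of_forall fun ω hne => hp hne.2
  filter_upwards [hae] with ω hω
  filter_upwards [hω] with u hu hmem hp
  exact hu ⟨by simp [interJump, hmem.1, hmem.2], hp⟩

lemma IsJumpSequence.stateProb_eq (hτ : IsJumpSequence μ F τ) (k : ℕ) {u : ℝ} (hu : 0 < u) :
    stateProb μ τ k u = μ.real (countXminus τ u ⁻¹' {k}) := by
  rw [stateProb, ← integral_indicator_one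
    ((hτ.measurable_countXminus hu) (measurableSet_singleton k))]
  refine integral_congr_ae ?_
  filter_upwards [hτ.ae_isJumpPath] with ω hω
  exact hω.interJump_eq k hu

lemma IsJumpSequence.stateMean_eq (hτ : IsJumpSequence μ F τ) (k : ℕ) {u : ℝ} (hu : 0 < u) :
    stateMean μ τ e k u = ∫ ω in countXminus τ u ⁻¹' {k}, e u ω ∂μ := by
  rw [stateMean, ← integral_indicator
    ((hτ.measurable_countXminus hu) (measurableSet_singleton k))]
  refine integral_congr_ae ?_
  filter_upwards [hτ.ae_isJumpPath] with ω hω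
  rw [hω.interJump_eq k hu, ← indicator_mul_left]
  simp only [Pi.one_apply, one_mul]

lemma IsRateData.ae_ae_mul_eq_totalIntensity [IsFiniteMeasure μ] (h : IsRateData m0 F L U Λ T e l)
    (hτ : IsJumpSequence μ F τ) {η : ℝ → Ω → ℝ} {lam : ℝ → ℕ → ℝ} {ν : Measure ℝ} [SFinite ν]
    (hpos : ∀ᵐ u ∂ν, 0 < u)
    (hη : ∀ᵐ ω ∂μ, ∀ᵐ u ∂ν, η u ω = e u ω) (hη' : ∀ᵐ u ∂ν, ∀ᵐ ω ∂μ, η u ω = e u ω)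
    (hl : ∀ k, ∀ᵐ u ∂ν, lam u k = l u k) :
    ∀ᵐ ω ∂μ, ∀ᵐ u ∂ν,
      η u ω / (μ[η u | MeasurableSpace.comap (countXminus τ u) inferInstance]) ω *
          lam u (countXminus τ u ω) = totalIntensity μ τ e l u ω := by
  have hne := ae_all_iff.2 fun k => ae_ae_stateProb_ne_zero (μ := μ) hτ.measurable k ν
  filter_upwards [hτ.ae_isJumpPath, hne, hη] with ω hω hneω hηω
  filter_upwards [hηω, ae_all_iff.2 hneω, hη', ae_all_iff.2 hl, hpos] with u hηu hneu hη'u hlu hu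
  have hp := hneu _ ((hω.countXminus_eq_iff hu _).1 rfl)
  have hN := hτ.measurable_countXminus hu
  have hcond : (μ[η u | MeasurableSpace.comap (countXminus τ u) inferInstance]) ω =
      stateMean μ τ e (countXminus τ u ω) u / stateProb μ τ (countXminus τ u ω) u := by
    rw [hτ.stateProb_eq _ hu] at hp ⊢
    rw [hτ.stateMean_eq _ hu, condExp_comap_eq_setIntegral_div hN ((h.integrable u).congr
      (EventuallyEq.symm hη'u)) hp, integral_congr_ae (ae_restrict_of_ae hη'u)]
  rw [hcond, hηu, hlu, totalIntensity, rateFactor, div_div_eq_mul_div]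
  ring

end Intensity

section IntervalIntegral

variable {f : ℝ → ℝ} {r s t C : ℝ}

lemma setIntegral_Ioc_add_Ioc (hf : IntegrableOn f (Ioc r t)) (hrs : r ≤ s) (hst : s ≤ t) :
    (∫ u in Ioc r s, f u) + ∫ u in Ioc s t, f u = ∫ u in Ioc r t, f u := by
  rw [← setIntegral_union (Ioc_disjoint_Ioc_of_le le_rfl) measurableSet_Ioc
    (hf.mono_set (Ioc_subset_Ioc_right hst)) (hf.mono_set (Ioc_subset_Ioc_left hrs)),
    Ioc_union_Ioc_eq_Ioc hrs hst]

lemma setIntegral_Ioc_mem_Icc (hst : s ≤ t) (hf : ∀ u ∈ Ioc s t, f u ∈ Icc 0 C) :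
    ∫ u in Ioc s t, f u ∈ Icc 0 (C * (t - s)) := by
  refine ⟨setIntegral_nonneg measurableSet_Ioc fun u hu => (hf u hu).1, ?_⟩
  have hnorm := norm_setIntegral_le_of_norm_le_const (μ := volume) (C := C)
    measure_Ioc_lt_top fun u hu => by
      rw [Real.norm_of_nonneg (hf u hu).1]
      exact (hf u hu).2
  rw [Real.volume_real_Ioc_of_le hst] at hnorm
  exact (le_abs_self _).trans hnorm

end IntervalIntegral

section GridTransform

lemma survival_sub (σ : Ω → ℝ) (ω : Ω) {s t : ℝ} (hst : s ≤ t) :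
    survival σ s ω - survival σ t ω = if s < σ ω ∧ σ ω ≤ t then 1 else 0 := by
  rw [survival, survival]
  split_ifs <;> grind

lemma compIncr_add {σ : Ω → ℝ} {κ : ℝ → Ω → ℝ} {ω : Ω} {r s t : ℝ}
    (hκ : IntegrableOn (κ · ω) (Ioc r t)) (hrs : r ≤ s) (hst : s ≤ t) :
    compIncr σ κ r s ω + compIncr σ κ s t ω = compIncr σ κ r t ω := by
  rw [compIncr, compIncr, compIncr, ← setIntegral_Ioc_add_Ioc hκ hrs hst]
  ring

lemma sum_compIncr_uniformGrid {σ : Ω → ℝ} {κ : ℝ → Ω → ℝ} {ω : Ω} {s t : ℝ}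
    (hκ : IntegrableOn (κ · ω) (Ioc s t)) (hst : s ≤ t) (n : ℕ) :
    ∑ i ∈ Finset.range (n + 1),
        compIncr σ κ (uniformGrid s t n i) (uniformGrid s t n (i + 1)) ω =
      compIncr σ κ s t ω := by
  have htelescope := Finset.sum_range_sub (fun i => compIncr σ κ s (uniformGrid s t n i) ω) (n + 1)
  have hself : compIncr σ κ s s ω = 0 := by simp [compIncr]
  rw [uniformGrid_last, uniformGrid_zero, hself, sub_zero] at htelescope
  rw [← htelescope]
  refine Finset.sum_congr rfl fun i hi => eq_sub_of_add_eq' ?_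
  have hle : uniformGrid s t n (i + 1) ≤ t := uniformGrid_le hst (Finset.mem_range.1 hi)
  exact compIncr_add (hκ.mono_set (Ioc_subset_Ioc_right hle)) (le_uniformGrid hst n i)
    (monotone_uniformGrid hst n i.le_succ)

/-- The indicator of the event `X_t = k`. -/
def stateIndicator (τ : ℕ → Ω → ℝ) (k : ℕ) (t : ℝ) (ω : Ω) : ℝ :=
  (countX τ t ⁻¹' {k}).indicator 1 ω

/-- The counting process compensated by an intensity `f`. -/
def compCount (τ : ℕ → Ω → ℝ) (f : ℝ → Ω → ℝ) (t : ℝ) (ω : Ω) : ℝ :=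
  countX τ t ω - ∫ u in Ioc 0 t, f u ω

/-- The integral of the indicator process of state `k` against `M`, discretized on the uniform grid
of `[s, t]` with `n + 1` cells. -/
def gridTransform (τ : ℕ → Ω → ℝ) (k : ℕ) (M : ℝ → Ω → ℝ) (s t : ℝ) (n : ℕ) (ω : Ω) : ℝ :=
  ∑ i ∈ Finset.range (n + 1), stateIndicator τ k (uniformGrid s t n i) ω *
    (M (uniformGrid s t n (i + 1)) ω - M (uniformGrid s t n i) ω)

variable {τ : ℕ → Ω → ℝ} {ω : Ω} {f κ : ℝ → Ω → ℝ} {s t C : ℝ} {k : ℕ}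

lemma abs_stateIndicator_le_one (t : ℝ) (ω : Ω) : |stateIndicator τ k t ω| ≤ 1 := by
  by_cases hX : ω ∈ countX τ t ⁻¹' {k} <;> simp [stateIndicator, hX]

lemma compCount_sub (hf : IntegrableOn (f · ω) (Ioc 0 t)) (hs : 0 ≤ s) (hst : s ≤ t) :
    compCount τ f t ω - compCount τ f s ω =
      (countX τ t ω - countX τ s ω : ℝ) - ∫ u in Ioc s t, f u ω := by
  rw [compCount, compCount, ← setIntegral_Ioc_add_Ioc hf hs hst]
  ring

namespace IsJumpPath

lemma stateIndicator_mul_countX_sub (h : IsJumpPath τ ω) (hs : 0 ≤ s) (hst : s ≤ t)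
    (hgap : t - s < τ (k + 1) ω - τ k ω) (hgap' : t - s < τ (k + 2) ω - τ (k + 1) ω) :
    stateIndicator τ k s ω * (countX τ t ω - countX τ s ω) =
      survival (τ (k + 1)) s ω - survival (τ (k + 1)) t ω := by
  rw [survival_sub _ _ hst]
  by_cases hX : countX τ s ω = k
  · obtain ⟨-, hks⟩ := (h.countX_eq_iff hs k).1 hX
    rw [stateIndicator, indicator_of_mem (by exact hX), Pi.one_apply, one_mul, hX]
    by_cases hjump : τ (k + 1) ω ≤ t
    · have hXt : countX τ t ω = k + 1 :=
        (h.countX_eq_iff (hs.trans hst) (k + 1)).2 ⟨hjump, by linarith⟩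
      simp [hXt, hks, hjump]
    · have hXt : countX τ t ω = k := (h.countX_eq_iff (hs.trans hst) k).2
        ⟨((h.countX_eq_iff hs k).1 hX).1.trans hst, not_le.1 hjump⟩
      simp [hXt, hjump]
  · rw [stateIndicator, indicator_of_notMem (by exact hX), zero_mul, if_neg]
    exact fun hjump => hX ((h.countX_eq_iff hs k).2 ⟨by linarith [hjump.2], hjump.1⟩)

lemma stateIndicator_mul_setIntegral_eq (h : IsJumpPath τ ω) (hs : 0 ≤ s)
    (hk : ¬(s < τ k ω ∧ τ k ω ≤ t)) (hk' : ¬(s < τ (k + 1) ω ∧ τ (k + 1) ω ≤ t)) :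
    stateIndicator τ k s ω * ∫ u in Ioc s t, f u ω =
      ∫ u in Ioc s t, (Ioc (τ k ω) (τ (k + 1) ω)).indicator (f · ω) u := by
  rw [← integral_const_mul]
  refine setIntegral_congr_fun measurableSet_Ioc fun u hu => ?_
  have hstate : ω ∈ countX τ s ⁻¹' {k} ↔ u ∈ Ioc (τ k ω) (τ (k + 1) ω) := by
    rw [mem_preimage, mem_singleton_iff, h.countX_eq_iff hs, mem_Ioc]
    grind
  by_cases hmem : u ∈ Ioc (τ k ω) (τ (k + 1) ω)
  · simp only [stateIndicator, indicator_of_mem (hstate.2 hmem), indicator_of_mem hmem,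
      Pi.one_apply, one_mul]
  · simp only [stateIndicator, indicator_of_notMem (mt hstate.1 hmem), indicator_of_notMem hmem,
      zero_mul]

lemma abs_stateIndicator_mul_setIntegral_sub_le (h : IsJumpPath τ ω) (hs : 0 ≤ s) (hst : s ≤ t)
    (hf : ∀ u, f u ω ∈ Icc 0 C) :
    |stateIndicator τ k s ω * (∫ u in Ioc s t, f u ω) -
        ∫ u in Ioc s t, (Ioc (τ k ω) (τ (k + 1) ω)).indicator (f · ω) u| ≤
      C * (t - s) * ((survival (τ k) s ω - survival (τ k) t ω) +
        (survival (τ (k + 1)) s ω - survival (τ (k + 1)) t ω)) := by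
  have hC : 0 ≤ C := (hf 0).1.trans (hf 0).2
  have hCst : 0 ≤ C * (t - s) := mul_nonneg hC (sub_nonneg.2 hst)
  rw [survival_sub _ _ hst, survival_sub _ _ hst]
  by_cases hjump : (s < τ k ω ∧ τ k ω ≤ t) ∨ (s < τ (k + 1) ω ∧ τ (k + 1) ω ≤ t)
  · have hfst := setIntegral_Ioc_mem_Icc hst fun u _ => hf u
    have hindicator := setIntegral_Ioc_mem_Icc (f := (Ioc (τ k ω) (τ (k + 1) ω)).indicator (f · ω))
      hst fun u _ => ⟨indicator_nonneg (fun v _ => (hf v).1) u,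
        indicator_le' (fun v _ => (hf v).2) (fun _ _ => hC) u⟩
    have hstate : stateIndicator τ k s ω * (∫ u in Ioc s t, f u ω) ∈ Icc 0 (C * (t - s)) := by
      by_cases hX : ω ∈ countX τ s ⁻¹' {k}
      · simpa only [stateIndicator, indicator_of_mem hX, Pi.one_apply, one_mul] using hfst
      · simpa only [stateIndicator, indicator_of_notMem hX, zero_mul] using ⟨le_rfl, hCst⟩
    refine (abs_sub_le_of_nonneg_of_le hstate.1 hstate.2 hindicator.1 hindicator.2).trans
      (le_mul_of_one_le_right hCst ?_)
    split_ifs <;> grind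
  · obtain ⟨hk, hk'⟩ := not_or.1 hjump
    rw [h.stateIndicator_mul_setIntegral_eq hs hk hk', sub_self, abs_zero, if_neg hk, if_neg hk',
      add_zero, mul_zero]

lemma abs_stateIndicator_mul_compCount_sub_le (h : IsJumpPath τ ω)
    (hf : ∀ u, f u ω ∈ Icc 0 C) (hfi : IntegrableOn (f · ω) (Ioc 0 t))
    (hκ : ∀ u, 0 < u → κ u ω = (Ioc (τ k ω) (τ (k + 1) ω)).indicator (f · ω) u)
    (hs : 0 ≤ s) (hst : s ≤ t)
    (hgap : t - s < τ (k + 1) ω - τ k ω) (hgap' : t - s < τ (k + 2) ω - τ (k + 1) ω) :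
    |stateIndicator τ k s ω * (compCount τ f t ω - compCount τ f s ω) -
        compIncr (τ (k + 1)) κ s t ω| ≤
      C * (t - s) * ((survival (τ k) s ω - survival (τ k) t ω) +
        (survival (τ (k + 1)) s ω - survival (τ (k + 1)) t ω)) := by
  have hκint : ∫ u in Ioc s t, κ u ω =
      ∫ u in Ioc s t, (Ioc (τ k ω) (τ (k + 1) ω)).indicator (f · ω) u :=
    setIntegral_congr_fun measurableSet_Ioc fun u hu => hκ u (hs.trans_lt hu.1)
  rw [compCount_sub hfi hs hst, mul_sub, h.stateIndicator_mul_countX_sub hs hst hgap hgap',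
    compIncr, hκint, sub_sub_sub_cancel_left, abs_sub_comm]
  exact h.abs_stateIndicator_mul_setIntegral_sub_le hs hst hf

lemma tendsto_gridTransform (h : IsJumpPath τ ω)
    (hf : ∀ u, f u ω ∈ Icc 0 C) (hfi : IntegrableOn (f · ω) (Ioc 0 t))
    (hκ : ∀ u, 0 < u → κ u ω = (Ioc (τ k ω) (τ (k + 1) ω)).indicator (f · ω) u)
    (hs : 0 ≤ s) (hst : s ≤ t) :
    Tendsto (fun n => gridTransform τ k (compCount τ f) s t n ω) atTop
      (𝓝 (compIncr (τ (k + 1)) κ s t ω)) := by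
  have hκi : IntegrableOn (κ · ω) (Ioc s t) :=
    IntegrableOn.congr_fun ((hfi.mono_set (Ioc_subset_Ioc_left hs)).indicator measurableSet_Ioc)
      (fun u hu => (hκ u (hs.trans_lt hu.1)).symm) measurableSet_Ioc
  have hgap : 0 < min (τ (k + 1) ω - τ k ω) (τ (k + 2) ω - τ (k + 1) ω) :=
    lt_min (sub_pos.2 (h.strictMono k.lt_succ_self)) (sub_pos.2 (h.strictMono (k + 1).lt_succ_self))
  have hlim : Tendsto (fun n : ℕ => C * ((t - s) / (n + 1)) * (1 + 1)) atTop (𝓝 0) := by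
    simpa only [mul_zero, zero_mul] using
      ((tendsto_uniformGrid_mesh (t - s)).const_mul C).mul_const (1 + 1)
  rw [tendsto_iff_dist_tendsto_zero]
  refine squeeze_zero' (Eventually.of_forall fun n => dist_nonneg) ?_ hlim
  filter_upwards [(tendsto_uniformGrid_mesh (t - s)).eventually (gt_mem_nhds hgap)] with n hmesh
  have hcell : ∀ i ∈ Finset.range (n + 1), _ := fun i hi =>
    h.abs_stateIndicator_mul_compCount_sub_le hf
      (hfi.mono_set (Ioc_subset_Ioc_right (uniformGrid_le hst (Finset.mem_range.1 hi)))) hκ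
      (hs.trans (le_uniformGrid hst n i)) (monotone_uniformGrid hst n i.le_succ)
      (uniformGrid_succ_sub.trans_lt (hmesh.trans_le (min_le_left _ _)))
      (uniformGrid_succ_sub.trans_lt (hmesh.trans_le (min_le_right _ _)))
  rw [Real.dist_eq, gridTransform, ← sum_compIncr_uniformGrid hκi hst n, ← Finset.sum_sub_distrib]
  refine (Finset.abs_sum_le_sum_abs _ _).trans ((Finset.sum_le_sum hcell).trans ?_)
  simp only [uniformGrid_succ_sub]
  rw [← Finset.mul_sum, Finset.sum_add_distrib,
    Finset.sum_range_sub' fun i => survival (τ k) (uniformGrid s t n i) ω,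
    Finset.sum_range_sub' fun i => survival (τ (k + 1)) (uniformGrid s t n i) ω,
    uniformGrid_zero, uniformGrid_last]
  have hC : 0 ≤ C * ((t - s) / ((n : ℝ) + 1)) := mul_nonneg ((hf 0).1.trans (hf 0).2)
    (div_nonneg (sub_nonneg.2 hst) (by positivity))
  have hle (j : ℕ) : survival (τ j) s ω - survival (τ j) t ω ≤ 1 := by
    linarith [survival_le_one (τ j) s ω, survival_nonneg (τ j) t ω]
  exact mul_le_mul_of_nonneg_left (add_le_add (hle k) (hle (k + 1))) hC

lemma abs_gridTransform_le (h : IsJumpPath τ ω) (hf : ∀ u, f u ω ∈ Icc 0 C)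
    (hfi : IntegrableOn (f · ω) (Ioc 0 t)) (hs : 0 ≤ s) (hst : s ≤ t) (n : ℕ) :
    |gridTransform τ k (compCount τ f) s t n ω| ≤ countX τ t ω + C * (t - s) := by
  have hcell : ∀ i ∈ Finset.range (n + 1), |stateIndicator τ k (uniformGrid s t n i) ω *
      (compCount τ f (uniformGrid s t n (i + 1)) ω - compCount τ f (uniformGrid s t n i) ω)| ≤
      (countX τ (uniformGrid s t n (i + 1)) ω + C * uniformGrid s t n (i + 1)) -
        (countX τ (uniformGrid s t n i) ω + C * uniformGrid s t n i) := by
    intro i hi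
    have h0 := hs.trans (le_uniformGrid hst n i)
    have hle := monotone_uniformGrid hst n i.le_succ
    have hX : (countX τ (uniformGrid s t n i) ω : ℝ) ≤ countX τ (uniformGrid s t n (i + 1)) ω :=
      Nat.cast_le.2 (h.countX_mono h0 hle)
    have hfcell := setIntegral_Ioc_mem_Icc hle fun u _ => hf u
    rw [abs_mul, compCount_sub (hfi.mono_set (Ioc_subset_Ioc_right
      (uniformGrid_le hst (Finset.mem_range.1 hi)))) h0 hle]
    refine (mul_le_of_le_one_left (abs_nonneg _) (abs_stateIndicator_le_one _ ω)).trans ?_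
    rw [abs_le]
    constructor <;> linarith [hfcell.1, hfcell.2]
  refine (Finset.abs_sum_le_sum_abs _ _).trans ((Finset.sum_le_sum hcell).trans ?_)
  rw [Finset.sum_range_sub fun i => (countX τ (uniformGrid s t n i) ω : ℝ) +
    C * uniformGrid s t n i, uniformGrid_zero, uniformGrid_last]
  linarith [Nat.cast_nonneg (α := ℝ) (countX τ s ω)]

end IsJumpPath

end GridTransform

lemma IsMartingale.setIntegral_sub_eq_zero {m0 : MeasurableSpace Ω} {μ : Measure Ω}
    [IsFiniteMeasure μ] {G : ℝ → MeasurableSpace Ω} {M : ℝ → Ω → ℝ} (hM : IsMartingale μ G M)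
    {s t : ℝ} (hG : G s ≤ m0) (hs : 0 ≤ s) (hst : s ≤ t) {B : Set Ω} (hB : MeasurableSet[G s] B) :
    ∫ ω in B, (M t ω - M s ω) ∂μ = 0 := by
  have ht := hM.1 t (hs.trans hst)
  rw [integral_sub ht.integrableOn (hM.1 s hs).integrableOn, ← setIntegral_condExp hG ht hB,
    integral_congr_ae (ae_restrict_of_ae (hM.2.2 s t hs hst)), sub_self]

namespace IsJumpSequence

variable {m0 : MeasurableSpace Ω} {μ : Measure Ω}
  {F : ℝ → MeasurableSpace Ω} {τ : ℕ → Ω → ℝ} {M f κ : ℝ → Ω → ℝ} {s t C : ℝ} {k : ℕ} {B : Set Ω}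

lemma integrable_stateIndicator_mul (h : IsJumpSequence μ F τ) (hs : 0 ≤ s) {ξ : Ω → ℝ}
    (hξ : Integrable ξ μ) : Integrable (fun ω => stateIndicator τ k s ω * ξ ω) μ :=
  hξ.bdd_mul (c := 1) (measurable_one.indicator
    (h.measurable_countX hs (measurableSet_singleton k))).aestronglyMeasurable
    (Eventually.of_forall fun ω => abs_stateIndicator_le_one s ω)

lemma integrable_gridTransform_summand (h : IsJumpSequence μ F τ) (hs : 0 ≤ s) (hst : s ≤ t)
    (hM : ∀ r ∈ Icc 0 t, Integrable (M r) μ) (k : ℕ) {n i : ℕ} (hi : i ≤ n) :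
    Integrable (fun ω => stateIndicator τ k (uniformGrid s t n i) ω *
      (M (uniformGrid s t n (i + 1)) ω - M (uniformGrid s t n i) ω)) μ :=
  h.integrable_stateIndicator_mul (hs.trans (le_uniformGrid hst n i))
    (.sub (hM _ ⟨hs.trans (le_uniformGrid hst n _), uniformGrid_le hst (Nat.succ_le_succ hi)⟩)
      (hM _ ⟨hs.trans (le_uniformGrid hst n _), uniformGrid_le hst (Nat.le_succ_of_le hi)⟩))

lemma integrable_gridTransform (h : IsJumpSequence μ F τ) (hs : 0 ≤ s) (hst : s ≤ t)
    (hM : ∀ r ∈ Icc 0 t, Integrable (M r) μ) (k n : ℕ) :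
    Integrable (gridTransform τ k M s t n) μ :=
  integrable_finsetSum _ fun _ hi => h.integrable_gridTransform_summand hs hst hM k
    (Nat.lt_succ_iff.1 (Finset.mem_range.1 hi))

lemma setIntegral_gridTransform_eq_zero (h : IsJumpSequence μ F τ) (hs : 0 ≤ s) (hst : s ≤ t)
    (hM : ∀ r ∈ Icc 0 t, Integrable (M r) μ)
    (hmart : ∀ r u, 0 ≤ r → r ≤ u → u ≤ t → ∀ D, MeasurableSet[jumpFiltInf F τ r] D →
      ∫ ω in D, (M u ω - M r ω) ∂μ = 0)
    (hB : MeasurableSet[jumpFiltInf F τ s] B) (k n : ℕ) :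
    ∫ ω in B, gridTransform τ k M s t n ω ∂μ = 0 := by
  have hG := h.usualConditions_jumpFiltInf
  have hgrid (i : ℕ) : 0 ≤ uniformGrid s t n i := hs.trans (le_uniformGrid hst n i)
  simp only [gridTransform]
  rw [integral_finsetSum _ fun i hi => (h.integrable_gridTransform_summand hs hst hM k
    (Nat.lt_succ_iff.1 (Finset.mem_range.1 hi))).integrableOn]
  refine Finset.sum_eq_zero fun i hi => ?_
  have hX := h.measurableSet_countX_eq (hgrid i) k
  have hD := (hG.mono hs (le_uniformGrid hst n i) B hB).inter hX
  rw [← hmart _ _ (hgrid i) (monotone_uniformGrid hst n i.le_succ)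
    (uniformGrid_le hst (Finset.mem_range.1 hi)) _ hD,
    ← setIntegral_indicator (hG.le _ _ hX)]
  congr 1 with ω
  by_cases hω : countX τ (uniformGrid s t n i) ω = k <;> simp [stateIndicator, indicator, hω]

theorem setIntegral_compIncr_eq_zero [IsFiniteMeasure μ] (h : IsJumpSequence μ F τ)
    (hf : ∀ u ω, f u ω ∈ Icc 0 C)
    (hfi : ∀ᵐ ω ∂μ, IntegrableOn (f · ω) (Ioc 0 t))
    (hM : ∀ r ∈ Icc 0 t, Integrable (compCount τ f r) μ)
    (hmart : ∀ r u, 0 ≤ r → r ≤ u → u ≤ t → ∀ D, MeasurableSet[jumpFiltInf F τ r] D →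
      ∫ ω in D, (compCount τ f u ω - compCount τ f r ω) ∂μ = 0)
    (hκ : ∀ᵐ ω ∂μ, ∀ u, 0 < u → κ u ω = (Ioc (τ k ω) (τ (k + 1) ω)).indicator (f · ω) u)
    (hs : 0 ≤ s) (hst : s ≤ t) (hB : MeasurableSet[jumpFiltInf F τ s] B) :
    ∫ ω in B, compIncr (τ (k + 1)) κ s t ω ∂μ = 0 := by
  have ht := hs.trans hst
  have hcount : Integrable (fun ω => (countX τ t ω : ℝ)) μ := by
    refine (hM t ⟨ht, le_rfl⟩).norm.add (integrable_const (C * (t - 0))) |>.mono'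
      (measurable_from_top.comp (h.measurable_countX ht)).aestronglyMeasurable
      (Eventually.of_forall fun ω => ?_)
    have hmem := setIntegral_Ioc_mem_Icc ht fun u _ => hf u ω
    have habs := le_abs_self (compCount τ f t ω)
    rw [Real.norm_of_nonneg (Nat.cast_nonneg _), Pi.add_apply, Real.norm_eq_abs]
    rw [compCount] at habs ⊢
    linarith [hmem.2]
  refine tendsto_nhds_unique (tendsto_integral_of_dominated_convergence
    (fun ω => (countX τ t ω : ℝ) + C * (t - s))
    (fun n => (h.integrable_gridTransform hs hst hM k n).aestronglyMeasurable.restrict)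
    (hcount.add (integrable_const _)).integrableOn (fun n => ae_restrict_of_ae ?_)
    (ae_restrict_of_ae ?_))
    (tendsto_const_nhds.congr fun n =>
      (h.setIntegral_gridTransform_eq_zero hs hst hM hmart hB k n).symm)
  · filter_upwards [h.ae_isJumpPath, hfi] with ω hω hfω
    exact hω.abs_gridTransform_le (fun u => hf u ω) hfω hs hst n
  · filter_upwards [h.ae_isJumpPath, hfi, hκ] with ω hω hfω hκω
    exact hω.tendsto_gridTransform (fun u => hf u ω) hfω hκω hs hst

end IsJumpSequence

section InversionSetting

variable {m0 : MeasurableSpace Ω} {μ : Measure Ω} {F : ℝ → MeasurableSpace Ω} {L U Λ T : ℝ}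
  {η : ℝ → Ω → ℝ} {lam : ℝ → ℕ → ℝ} {hLU : L ≤ U} {hΛ : 0 ≤ Λ} {hT : 0 ≤ T}

lemma ProgMeas.isRateData_clamped (hη : ProgMeas F η) (hF : IsFiltration m0 F) (hL : 0 < L)
    (hlam : ∀ k, Measurable fun t => lam t k) :
    IsRateData m0 F L U Λ T (clampedProcess hLU hT η) (clampedRate hΛ lam) where
  L_pos := hL
  measurable_uncurry := hη.measurable_uncurry_clampedProcess.mono
    (sup_le_sup_left (MeasurableSpace.comap_mono (hF.2 T)) _) le_rfl
  adapted _ hs := hη.measurable_clampedProcess hs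
  mem_Icc _ _ := Subtype.coe_prop _
  measurable_rate k := (continuous_projIcc.measurable.comp (hlam k)).subtype_val
  rate_mem_Icc _ _ := Subtype.coe_prop _

lemma ae_ae_eq_clampedProcess [SFinite μ]
    (hη : ∀ᵐ p ∂μ.prod (volume.restrict (Ici 0)), L ≤ η p.2 p.1 ∧ η p.2 p.1 ≤ U) :
    (∀ᵐ ω ∂μ, ∀ᵐ u ∂volume.restrict (Ioc 0 T), η u ω = clampedProcess hLU hT η u ω) ∧
      ∀ᵐ u ∂volume.restrict (Ioc 0 T), ∀ᵐ ω ∂μ, η u ω = clampedProcess hLU hT η u ω := by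
  have hsub : Ioc 0 T ⊆ Ici (0 : ℝ) := fun u hu => hu.1.le
  have hswap := Measure.measurePreserving_swap (μ := volume.restrict (Ici (0 : ℝ))) (ν := μ)
    |>.quasiMeasurePreserving.ae hη
  constructor
  · filter_upwards [Measure.ae_ae_of_ae_prod hη] with ω hω
    filter_upwards [ae_restrict_of_ae_restrict_of_subset hsub hω,
      ae_restrict_mem measurableSet_Ioc] with u hu huT
    exact (clampedProcess_eq (Ioc_subset_Icc_self huT) hu).symm
  · filter_upwards [ae_restrict_of_ae_restrict_of_subset hsub (Measure.ae_ae_of_ae_prod hswap),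
      ae_restrict_mem measurableSet_Ioc] with u hu huT
    filter_upwards [hu] with ω hω
    exact (clampedProcess_eq (Ioc_subset_Icc_self huT) hω).symm

lemma ae_eq_clampedRate
    (hlam : ∀ k, ∀ᵐ t ∂volume.restrict (Ici 0), 0 ≤ lam t k ∧ lam t k ≤ Λ) (k : ℕ) :
    ∀ᵐ u ∂volume.restrict (Ioc 0 T), lam u k = clampedRate hΛ lam u k := by
  filter_upwards [ae_restrict_of_ae_restrict_of_subset (fun u hu => hu.1.le) (hlam k)] with u hu
  rw [clampedRate, projIcc_of_mem hΛ hu]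

variable [IsProbabilityMeasure μ] {τ : ℕ → Ω → ℝ} {e : ℝ → Ω → ℝ} {l : ℝ → ℕ → ℝ}

lemma IsJumpSequence.isJumpIntensity (hτ : IsJumpSequence μ F τ)
    (h : InversionSetting μ F η lam τ) (hr : IsRateData m0 F L U Λ T e l)
    (hη : ∀ᵐ ω ∂μ, ∀ᵐ u ∂volume.restrict (Ioc 0 T), η u ω = e u ω)
    (hη' : ∀ᵐ u ∂volume.restrict (Ioc 0 T), ∀ᵐ ω ∂μ, η u ω = e u ω)
    (hl : ∀ k, ∀ᵐ u ∂volume.restrict (Ioc 0 T), lam u k = l u k) (k : ℕ) :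
    ∃ Z, IsJumpIntensity μ (jumpFilt F τ k) (jumpFiltInf F τ) (τ (k + 1)) Z
      (jumpIntensity μ τ e l k) (U * (Λ * (1 / L))) T := by
  obtain ⟨-, -, -, -, hazema, hmart⟩ := h
  obtain ⟨Z, hZc, -, hZ⟩ := hazema k
  have hG := hτ.usualConditions_jumpFiltInf
  have hrate := hr.ae_ae_mul_eq_totalIntensity hτ
    ((ae_restrict_mem measurableSet_Ioc).mono fun u hu => hu.1) hη hη' hl
  have hcomp : ∀ᵐ ω ∂μ, ∀ r ≤ T, compCount τ (fun u ω => η u ω /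
      (μ[η u | MeasurableSpace.comap (countXminus τ u) inferInstance]) ω *
        lam u (countXminus τ u ω)) r ω = compCount τ (totalIntensity μ τ e l) r ω := by
    filter_upwards [hrate] with ω hω r hrT
    exact congrArg _ (integral_congr_ae
      (ae_restrict_of_ae_restrict_of_subset (Ioc_subset_Ioc_right hrT) hω))
  refine ⟨Z, hτ.usualConditions_jumpFilt k, hG.1, hτ.immersed k,
    fun t ht => hτ.measurableSet_le (k + 1) ht, hZc, hZ, hr.measurable_uncurry_jumpIntensity
      hτ.measurable k, hr.abs_jumpIntensity_le hτ.measurable k,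
    fun u hu huT => hr.measurable_jumpIntensity hτ k hu huT, fun s t hs hst htT B hB => ?_⟩
  refine hτ.setIntegral_compIncr_eq_zero (hr.totalIntensity_mem_Icc hτ.measurable)
    (hτ.ae_isJumpPath.mono fun ω hω => hr.integrableOn_totalIntensity hτ.measurable hω t)
    (fun r hrt => (hmart.1 r hrt.1).congr (hcomp.mono fun ω hω => hω r (hrt.2.trans htT)))
    (fun r u hr0 hru hut D hD => ?_) (hτ.ae_isJumpPath.mono fun ω hω u hu =>
      hω.jumpIntensity_eq k hu) hs hst hB
  rw [← hmart.setIntegral_sub_eq_zero (hG.le r) hr0 hru hD]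
  refine integral_congr_ae (ae_restrict_of_ae (hcomp.mono fun ω hω => ?_))
  exact (congrArg₂ _ (hω u (hut.trans htT)) (hω r (hru.trans (hut.trans htT)))).symm

/-- Up to time `T`, the jump `k + 1` occurs with intensity `jumpIntensity μ τ e l k` given the first
`k` jump times and all of `F T`. -/
def HasWeakJumpIntensity {_ : MeasurableSpace Ω} (μ : Measure Ω) (F : ℝ → MeasurableSpace Ω)
    (τ : ℕ → Ω → ℝ) (T : ℝ) (e : ℝ → Ω → ℝ) (l : ℝ → ℕ → ℝ) : Prop :=
  ∀ k ξ, BddMeas μ (jumpFilt F τ k T) 1 ξ → ∀ t ∈ Icc 0 T,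
    ∫ ω, ξ ω * (survival (τ (k + 1)) 0 ω - survival (τ (k + 1)) t ω) ∂μ =
      ∫ u in Ioc 0 t, ∫ ω, ξ ω * jumpIntensity μ τ e l k u ω ∂μ

lemma IsJumpSequence.hasWeakJumpIntensity (hτ : IsJumpSequence μ F τ)
    (h : InversionSetting μ F η lam τ) (hr : IsRateData m0 F L U Λ T e l)
    (hη : ∀ᵐ ω ∂μ, ∀ᵐ u ∂volume.restrict (Ioc 0 T), η u ω = e u ω)
    (hη' : ∀ᵐ u ∂volume.restrict (Ioc 0 T), ∀ᵐ ω ∂μ, η u ω = e u ω)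
    (hl : ∀ k, ∀ᵐ u ∂volume.restrict (Ioc 0 T), lam u k = l u k) :
    HasWeakJumpIntensity μ F τ T e l := fun k ξ hξ t ht => by
  obtain ⟨Z, hZ⟩ := hτ.isJumpIntensity h hr hη hη' hl k
  have hzero := hZ.integral_mul_compIncr_eq_zero hξ ht.1 ht.2
  rwa [hZ.integral_mul_compIncr le_rfl ht.1 (hξ.integrable (hZ.usualConditions.le T)),
    sub_eq_zero] at hzero

end InversionSetting

section Flux

variable {E : Type*} [MeasurableSpace E] {ν ν' : Measure E} {r w Ψ : E → ℝ} {L U b c : ℝ}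

/-- The measure `(∫ r dν / ∫ w dν) w ν` tested against `Ψ`. With `r` the indicator of a state and
`w` the restriction of `η` to this state, it is the rate at which mass leaves the state, whose total
is `∫ r dν` as required by the Markovian projection. -/
def flux (r w : E → ℝ) (ν : Measure E) (Ψ : E → ℝ) : ℝ :=
  (∫ y, r y ∂ν) / (∫ y, w y ∂ν) * ∫ y, Ψ y * w y ∂ν

/-- The weights `r` and `w` are measurable, `r` takes values in `[0, 1]`, and `w` is comparable to
`r` with constants `L` and `U`. -/
structure IsFluxWeight (L U : ℝ) (r w : E → ℝ) : Prop where
  L_pos : 0 < L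
  L_le_U : L ≤ U
  measurable_left : Measurable r
  measurable_right : Measurable w
  mem_Icc : ∀ y, r y ∈ Icc 0 1
  right_mem_Icc : ∀ y, w y ∈ Icc (L * r y) (U * r y)

lemma integrable_of_abs_le [IsFiniteMeasure ν] (hΨ : Measurable Ψ) (hc : ∀ y, |Ψ y| ≤ c) :
    Integrable Ψ ν :=
  .of_bound hΨ.aestronglyMeasurable c (Eventually.of_forall hc)

lemma abs_integral_sub_integral_le_mul (hb : ∀ Φ : E → ℝ, Measurable Φ → (∀ y, |Φ y| ≤ 1) →
    |∫ y, Φ y ∂ν - ∫ y, Φ y ∂ν'| ≤ b) (hΨ : Measurable Ψ) (hc : 0 < c) (hΨc : ∀ y, |Ψ y| ≤ c) :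
    |∫ y, Ψ y ∂ν - ∫ y, Ψ y ∂ν'| ≤ c * b := by
  have hscaled := hb (fun y => c⁻¹ * Ψ y) (hΨ.const_mul _) fun y => by
    rw [abs_mul, abs_of_pos (inv_pos.2 hc), inv_mul_le_iff₀ hc, mul_one]
    exact hΨc y
  rwa [integral_const_mul, integral_const_mul, ← mul_sub, abs_mul, abs_of_pos (inv_pos.2 hc),
    inv_mul_le_iff₀ hc] at hscaled

namespace IsFluxWeight

lemma right_nonneg (h : IsFluxWeight L U r w) (y : E) : 0 ≤ w y :=
  (mul_nonneg h.L_pos.le (h.mem_Icc y).1).trans (h.right_mem_Icc y).1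

lemma abs_left_le (h : IsFluxWeight L U r w) (y : E) : |r y| ≤ 1 :=
  abs_le.2 ⟨by linarith [(h.mem_Icc y).1], (h.mem_Icc y).2⟩

lemma abs_mul_right_le (h : IsFluxWeight L U r w) (hΨ : ∀ y, |Ψ y| ≤ 1) (y : E) :
    |Ψ y * w y| ≤ w y := by
  rw [abs_mul, abs_of_nonneg (h.right_nonneg y)]
  exact mul_le_of_le_one_left (h.right_nonneg y) (hΨ y)

lemma right_le (h : IsFluxWeight L U r w) (y : E) : w y ≤ U :=
  (h.right_mem_Icc y).2.trans
    (mul_le_of_le_one_right (h.L_pos.le.trans h.L_le_U) (h.mem_Icc y).2)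

lemma abs_right_le (h : IsFluxWeight L U r w) (y : E) : |w y| ≤ U :=
  (abs_of_nonneg (h.right_nonneg y)).trans_le (h.right_le y)

variable [IsFiniteMeasure ν] [IsFiniteMeasure ν']

lemma mul_integral_le (h : IsFluxWeight L U r w) : L * ∫ y, r y ∂ν ≤ ∫ y, w y ∂ν := by
  rw [← integral_const_mul]
  exact integral_mono ((integrable_of_abs_le h.measurable_left h.abs_left_le).const_mul L)
    (integrable_of_abs_le h.measurable_right h.abs_right_le) fun y => (h.right_mem_Icc y).1

lemma abs_integral_mul_le (h : IsFluxWeight L U r w) (hΨ : ∀ y, |Ψ y| ≤ 1) :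
    |∫ y, Ψ y * w y ∂ν| ≤ ∫ y, w y ∂ν := by
  rw [← Real.norm_eq_abs]
  exact norm_integral_le_of_norm_le (integrable_of_abs_le h.measurable_right h.abs_right_le)
    (Eventually.of_forall (h.abs_mul_right_le hΨ))

lemma div_mem_Icc (h : IsFluxWeight L U r w) :
    (∫ y, r y ∂ν) / ∫ y, w y ∂ν ∈ Icc 0 (1 / L) := by
  have hr : 0 ≤ ∫ y, r y ∂ν := integral_nonneg fun y => (h.mem_Icc y).1
  have hw : 0 ≤ ∫ y, w y ∂ν := integral_nonneg h.right_nonneg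
  refine ⟨div_nonneg hr hw, div_le_of_le_mul₀ hw (by have := h.L_pos; positivity) ?_⟩
  rw [one_div_mul_eq_div, le_div_iff₀' h.L_pos]
  exact h.mul_integral_le

lemma div_mul_cancel (h : IsFluxWeight L U r w) :
    (∫ y, r y ∂ν) / (∫ y, w y ∂ν) * ∫ y, w y ∂ν = ∫ y, r y ∂ν := by
  refine div_mul_cancel_of_imp fun hw => ?_
  have hr : 0 ≤ ∫ y, r y ∂ν := integral_nonneg fun y => (h.mem_Icc y).1
  have hle := h.mul_integral_le (ν := ν)
  rw [hw] at hle
  exact hr.antisymm' (nonpos_of_mul_nonpos_right hle h.L_pos)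

lemma abs_flux_sub_le (h : IsFluxWeight L U r w) (hb : ∀ Φ : E → ℝ, Measurable Φ →
    (∀ y, |Φ y| ≤ 1) → |∫ y, Φ y ∂ν - ∫ y, Φ y ∂ν'| ≤ b) (hΨ : Measurable Ψ)
    (hΨ1 : ∀ y, |Ψ y| ≤ 1) : |flux r w ν Ψ - flux r w ν' Ψ| ≤ (1 + 2 * (U / L)) * b := by
  have hU := h.L_pos.trans_le h.L_le_U
  have hr := hb r h.measurable_left h.abs_left_le
  have hw := abs_integral_sub_integral_le_mul hb h.measurable_right hU h.abs_right_le
  have hΨw := abs_integral_sub_integral_le_mul hb (hΨ.mul h.measurable_right) hU fun y =>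
    (h.abs_mul_right_le hΨ1 y).trans (h.right_le y)
  have hS' := h.abs_integral_mul_le (ν := ν') hΨ1
  have hA' := (abs_nonneg _).trans hS'
  have hq := h.div_mem_Icc (ν := ν)
  have hLinv := hq.1.trans hq.2
  have hcancel := h.div_mul_cancel (ν := ν)
  have hcancel' := h.div_mul_cancel (ν := ν')
  simp only [flux, Pi.mul_apply] at hΨw ⊢
  set p := ∫ y, r y ∂ν
  set p' := ∫ y, r y ∂ν'
  set A := ∫ y, w y ∂ν
  set A' := ∫ y, w y ∂ν'
  set S := ∫ y, Ψ y * w y ∂ν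
  set S' := ∫ y, Ψ y * w y ∂ν'
  have hratio : |S' * (p / A - p' / A')| ≤ 1 / L * (U * b) + b := calc
    |S' * (p / A - p' / A')| ≤ |A' * (p / A - p' / A')| := by
      rw [abs_mul, abs_mul, abs_of_nonneg hA']
      exact mul_le_mul_of_nonneg_right hS' (abs_nonneg _)
    _ = |(p / A) * (A' - A) + (p - p')| := by
      congr 1
      linear_combination hcancel - hcancel'
    _ ≤ p / A * |A' - A| + |p - p'| :=
      (abs_add_le _ _).trans_eq (by rw [abs_mul, abs_of_nonneg hq.1])
    _ ≤ 1 / L * (U * b) + b := by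
      rw [abs_sub_comm A']
      exact add_le_add (mul_le_mul hq.2 hw (abs_nonneg _) hLinv) hr
  calc |p / A * S - p' / A' * S'| = |p / A * (S - S') + S' * (p / A - p' / A')| := by
        congr 1
        ring
    _ ≤ 1 / L * (U * b) + (1 / L * (U * b) + b) := by
      refine (abs_add_le _ _).trans (add_le_add ?_ hratio)
      rw [abs_mul, abs_of_nonneg hq.1]
      exact mul_le_mul hq.2 hΨw (abs_nonneg _) hLinv
    _ = (1 + 2 * (U / L)) * b := by ring

end IsFluxWeight

/-- The family of sub-probability measures `ν t`, `0 ≤ t ≤ T`, loses mass at rate `l` times the flux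
of the weights `r` and `w`. -/
structure IsFluxEvolution (r w : ℝ → E → ℝ) (l : ℝ → ℝ) (T : ℝ) (ν : ℝ → Measure E) : Prop where
  measure_univ_le : ∀ t, ν t univ ≤ 1
  integrableOn : ∀ Ψ : E → ℝ, Measurable Ψ → (∀ y, |Ψ y| ≤ 1) →
    IntegrableOn (fun u => l u * flux (r u) (w u) (ν u) Ψ) (Ioc 0 T)
  integral_eq : ∀ Ψ : E → ℝ, Measurable Ψ → (∀ y, |Ψ y| ≤ 1) → ∀ t ∈ Icc 0 T,
    ∫ y, Ψ y ∂ν t = ∫ y, Ψ y ∂ν 0 - ∫ u in Ioc 0 t, l u * flux (r u) (w u) (ν u) Ψ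

lemma setIntegral_Ioc_mul_pow_div_factorial {t : ℝ} (ht : 0 ≤ t) (C : ℝ) (n : ℕ) :
    ∫ u in Ioc 0 t, C * (2 * ((C * u) ^ n / n.factorial)) =
      2 * ((C * t) ^ (n + 1) / (n + 1).factorial) := by
  have hfun (u : ℝ) : C * (2 * ((C * u) ^ n / n.factorial)) =
      2 * C ^ (n + 1) / n.factorial * u ^ n := by ring
  simp only [hfun]
  rw [← intervalIntegral.integral_of_le ht, intervalIntegral.integral_const_mul, integral_pow,
    Nat.factorial_succ]
  push_cast
  field_simp
  ring

namespace IsFluxEvolution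

variable {r w : ℝ → E → ℝ} {l : ℝ → ℝ} {Λ T t : ℝ} {ν ν' : ℝ → Measure E}

lemma isFiniteMeasure (h : IsFluxEvolution r w l T ν) (t : ℝ) : IsFiniteMeasure (ν t) :=
  ⟨(h.measure_univ_le t).trans_lt ENNReal.one_lt_top⟩

lemma abs_integral_le_one (h : IsFluxEvolution r w l T ν) (hΨ1 : ∀ y, |Ψ y| ≤ 1) (t : ℝ) :
    |∫ y, Ψ y ∂ν t| ≤ 1 := by
  have := h.isFiniteMeasure t
  rw [← Real.norm_eq_abs]
  refine (norm_integral_le_of_norm_le_const (Eventually.of_forall hΨ1)).trans ?_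
  rw [one_mul]
  exact ENNReal.toReal_le_of_le_ofReal zero_le_one (by simpa using h.measure_univ_le t)

lemma abs_integral_sub_le (h : IsFluxEvolution r w l T ν) (h' : IsFluxEvolution r w l T ν')
    (hrw : ∀ u, IsFluxWeight L U (r u) (w u)) (hl : ∀ u, l u ∈ Icc 0 Λ) (h0 : ν 0 = ν' 0) (n : ℕ)
    (hΨ : Measurable Ψ) (hΨ1 : ∀ y, |Ψ y| ≤ 1) (ht : t ∈ Icc 0 T) :
    |∫ y, Ψ y ∂ν t - ∫ y, Ψ y ∂ν' t| ≤
      2 * ((Λ * (1 + 2 * (U / L)) * t) ^ n / n.factorial) := by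
  induction n generalizing Ψ t with
  | zero =>
    refine (abs_sub _ _).trans ?_
    linarith [h.abs_integral_le_one hΨ1 t, h'.abs_integral_le_one hΨ1 t,
      show 2 * ((Λ * (1 + 2 * (U / L)) * t) ^ 0 / (Nat.factorial 0 : ℝ)) = 2 by simp]
  | succ n ih =>
    have hsub : Ioc 0 t ⊆ Ioc 0 T := Ioc_subset_Ioc_right ht.2
    rw [h.integral_eq Ψ hΨ hΨ1 t ht, h'.integral_eq Ψ hΨ hΨ1 t ht, h0, sub_sub_sub_cancel_left,
      ← integral_sub ((h'.integrableOn Ψ hΨ hΨ1).mono_set hsub)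
        ((h.integrableOn Ψ hΨ hΨ1).mono_set hsub),
      ← setIntegral_Ioc_mul_pow_div_factorial ht.1]
    rw [← Real.norm_eq_abs]
    refine norm_integral_le_of_norm_le ((Continuous.integrableOn_Icc (by fun_prop)).mono_set
      Ioc_subset_Icc_self) ?_
    filter_upwards [ae_restrict_mem measurableSet_Ioc] with u hu
    have := h.isFiniteMeasure u
    have := h'.isFiniteMeasure u
    have hflux := (hrw u).abs_flux_sub_le (ν := ν u) (ν' := ν' u)
      (fun Φ hΦ hΦ1 => ih hΦ hΦ1 ⟨hu.1.le, hu.2.trans ht.2⟩) hΨ hΨ1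
    rw [norm_sub_rev, Real.norm_eq_abs, ← mul_sub, abs_mul, abs_of_nonneg (hl u).1, mul_assoc Λ]
    exact mul_le_mul (hl u).2 hflux (abs_nonneg _) ((hl u).1.trans (hl u).2)

theorem eq_of_eq_zero (h : IsFluxEvolution r w l T ν) (h' : IsFluxEvolution r w l T ν')
    (hrw : ∀ u, IsFluxWeight L U (r u) (w u)) (hl : ∀ u, l u ∈ Icc 0 Λ) (h0 : ν 0 = ν' 0)
    (ht : t ∈ Icc 0 T) : ν t = ν' t := by
  have := h.isFiniteMeasure t
  have := h'.isFiniteMeasure t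
  have hlim := (FloorSemiring.tendsto_pow_div_factorial_atTop
    (Λ * (1 + 2 * (U / L)) * t)).const_mul 2
  rw [mul_zero] at hlim
  refine Measure.ext fun B hB => ?_
  have hle := ge_of_tendsto' hlim fun n => h.abs_integral_sub_le h' hrw hl h0 n
    (measurable_one.indicator hB) (fun y => by
      by_cases hy : y ∈ B <;> simp [hy]) ht
  rw [integral_indicator_one hB, integral_indicator_one hB] at hle
  exact (measureReal_eq_measureReal_iff).1 (sub_eq_zero.1 (abs_nonpos_iff.1 hle))

end IsFluxEvolution

end Flux

section SurvivorLaw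

variable {m0 : MeasurableSpace Ω} {E : Type*} [MeasurableSpace E] {μ : Measure Ω} {Y Y' : Ω → E}
  {σ σ' : Ω → ℝ}

/-- The law of `Y` on the event `u < σ`. -/
def survivorLaw (μ : Measure Ω) (Y : Ω → E) (σ : Ω → ℝ) (u : ℝ) : Measure E :=
  (μ.restrict {ω | u < σ ω}).map Y

lemma survivorLaw_apply (hY : Measurable Y) (hσ : Measurable σ) (u : ℝ) {B : Set E}
    (hB : MeasurableSet B) : survivorLaw μ Y σ u B = μ (Y ⁻¹' B ∩ {ω | u < σ ω}) := by
  rw [survivorLaw, Measure.map_apply hY hB,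
    Measure.restrict_apply' (measurableSet_lt measurable_const hσ)]

lemma survivorLaw_zero (hpos : ∀ᵐ ω ∂μ, 0 < σ ω) : survivorLaw μ Y σ 0 = μ.map Y := by
  rw [survivorLaw, Measure.restrict_eq_self_of_ae_mem (s := {ω | 0 < σ ω}) hpos]

lemma integral_survivorLaw (hY : Measurable Y) (hσ : Measurable σ) (u : ℝ) {Ψ : E → ℝ}
    (hΨ : Measurable Ψ) :
    ∫ y, Ψ y ∂survivorLaw μ Y σ u = ∫ ω, Ψ (Y ω) * survival σ u ω ∂μ := by
  rw [survivorLaw, integral_map hY.aemeasurable hΨ.aestronglyMeasurable,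
    ← integral_indicator (measurableSet_lt measurable_const hσ)]
  congr 1 with ω
  by_cases hω : u < σ ω <;> simp [survival, hω]

lemma measure_preimage_min_inter_eq_survivorLaw (hY : Measurable Y) (hσ : Measurable σ)
    (hpos : ∀ᵐ ω ∂μ, 0 < σ ω) {B : Set E} (hB : MeasurableSet B) {t T : ℝ} (htT : t < T) :
    μ ((fun ω => min (σ ω) T) ⁻¹' Ioi t ∩ Y ⁻¹' B) = survivorLaw μ Y σ (max t 0) B := by
  rw [survivorLaw_apply hY hσ _ hB, inter_comm]
  refine measure_congr ?_
  filter_upwards [hpos] with ω hω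
  exact propext (and_congr_right fun _ => by simp [htT, hω])

theorem map_prodMk_min_eq_of_survivorLaw_eq [IsFiniteMeasure μ] {T : ℝ} (hT : 0 ≤ T)
    (hY : Measurable Y) (hY' : Measurable Y') (hσ : Measurable σ) (hσ' : Measurable σ')
    (hpos : ∀ᵐ ω ∂μ, 0 < σ ω) (hpos' : ∀ᵐ ω ∂μ, 0 < σ' ω)
    (h : ∀ t ∈ Icc 0 T, survivorLaw μ Y σ t = survivorLaw μ Y' σ' t) :
    μ.map (fun ω => (Y ω, min (σ ω) T)) = μ.map fun ω => (Y' ω, min (σ' ω) T) := by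
  have hmin (σ : Ω → ℝ) (hσ : Measurable σ) : Measurable fun ω => min (σ ω) T :=
    hσ.min measurable_const
  have hlaw : μ.map Y = μ.map Y' := by
    rw [← survivorLaw_zero hpos, h 0 ⟨le_rfl, hT⟩, survivorLaw_zero hpos']
  refine Measure.ext_prod fun {B S} hB hS => ?_
  suffices hBS : (μ.restrict (Y ⁻¹' B)).map (fun ω => min (σ ω) T) =
      (μ.restrict (Y' ⁻¹' B)).map fun ω => min (σ' ω) T by
    have happly := congrArg (· S) hBS
    simp only [Measure.map_apply (hmin σ hσ) hS, Measure.map_apply (hmin σ' hσ') hS,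
      Measure.restrict_apply' (hY hB), Measure.restrict_apply' (hY' hB)] at happly
    rwa [Measure.map_apply (hY.prodMk (hmin σ hσ)) (hB.prod hS),
      Measure.map_apply (hY'.prodMk (hmin σ' hσ')) (hB.prod hS), mk_preimage_prod,
      mk_preimage_prod, inter_comm, inter_comm (Y' ⁻¹' B)]
  refine ext_of_generate_finite _ (BorelSpace.measurable_eq.trans (borel_eq_generateFrom_Ioi ℝ))
    isPiSystem_Ioi ?_ ?_
  · rintro _ ⟨t, rfl⟩
    rw [Measure.map_apply (hmin σ hσ) measurableSet_Ioi, Measure.restrict_apply' (hY hB),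
      Measure.map_apply (hmin σ' hσ') measurableSet_Ioi, Measure.restrict_apply' (hY' hB)]
    rcases lt_or_ge t T with htT | hTt
    · rw [measure_preimage_min_inter_eq_survivorLaw hY hσ hpos hB htT,
        measure_preimage_min_inter_eq_survivorLaw hY' hσ' hpos' hB htT,
        h _ ⟨le_max_right _ _, max_le htT.le hT⟩]
    · have hempty (σ : Ω → ℝ) : (fun ω => min (σ ω) T) ⁻¹' Ioi t = ∅ :=
        eq_empty_of_forall_notMem fun ω hω => (lt_min_iff.1 hω).2.not_ge hTt
      rw [hempty, hempty, empty_inter, empty_inter]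
  · have hB' := congrArg (· B) hlaw
    simpa only [Measure.map_apply (hmin σ hσ) .univ, Measure.map_apply (hmin σ' hσ') .univ,
      Measure.map_apply hY hB, Measure.map_apply hY' hB, preimage_univ, Measure.restrict_apply_univ]
      using hB'

end SurvivorLaw

section JumpHistory

variable {m0 : MeasurableSpace Ω} {E : Type*} {μ : Measure Ω} {F : ℝ → MeasurableSpace Ω}
  {τ τ' : ℕ → Ω → ℝ} {ι : Ω → E} {L U Λ T u : ℝ} {e : ℝ → E → ℝ} {l : ℝ → ℕ → ℝ}

/-- The base information `ι` together with the first `k` jump times truncated at `T`; the later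
entries are filled up with `0`, so that the histories for all `k` take values in the same space. -/
def jumpHistory (ι : Ω → E) (τ : ℕ → Ω → ℝ) (T : ℝ) (k : ℕ) (ω : Ω) : E × (ℕ → ℝ) :=
  (ι ω, fun j => if j ≤ k then min (τ j ω) T else 0)

/-- The indicator of the histories whose `k`-th jump happens before `u`. -/
def jumpedBefore (k : ℕ) (u : ℝ) (y : E × (ℕ → ℝ)) : ℝ := (Iio u).indicator 1 (y.2 k)

lemma IsJumpSequence.measurable_min (hτ : IsJumpSequence μ F τ) (hT : 0 ≤ T) {j k : ℕ}
    (hj : j ≤ k) : Measurable[jumpFilt F τ k T] fun ω => min (τ j ω) T := by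
  refine @measurable_of_Iic _ _ _ _ _ (jumpFilt F τ k T) _ _ _ _ fun s => ?_
  have hpre : (fun ω => min (τ j ω) T) ⁻¹' Iic s = {ω | τ j ω ≤ s ∨ T ≤ s} := by
    ext ω
    simp
  rw [hpre]
  rcases le_or_gt T s with hTs | hsT
  · simp only [hTs, or_true, ofPred_true]
    exact @MeasurableSet.univ _ (jumpFilt F τ k T)
  simp only [hsT.not_ge, or_false]
  rcases lt_or_ge s 0 with hs | hs
  · refine (hτ.usualConditions_jumpFilt k).measurableSet_of_ae_iff hT
      (@MeasurableSet.empty _ (jumpFilt F τ k T)) ?_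
    filter_upwards [hτ.ae_isJumpPath] with ω hω
    simpa using hs.trans_le (hω.nonneg j)
  · exact (hτ.usualConditions_jumpFilt k).mono hs hsT.le _ (hτ.measurableSet_jumpFilt_le hj hs)

lemma IsJumpSequence.ae_pos (hτ : IsJumpSequence μ F τ) (k : ℕ) : ∀ᵐ ω ∂μ, 0 < τ (k + 1) ω :=
  hτ.ae_isJumpPath.mono fun ω hω => by simpa only [hω.zero] using hω.strictMono k.succ_pos

lemma jumpHistory_succ (k : ℕ) : jumpHistory ι τ T (k + 1) =
    (fun p : (E × (ℕ → ℝ)) × ℝ => (p.1.1, Function.update p.1.2 (k + 1) p.2)) ∘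
      fun ω => (jumpHistory ι τ T k ω, min (τ (k + 1) ω) T) := by
  ext ω j
  · rfl
  · rcases eq_or_ne j (k + 1) with rfl | hj
    · simp [jumpHistory]
    · simp [jumpHistory, hj, Nat.le_succ_iff]

lemma ae_ae_jumpedBefore_mul_survival [SFinite μ] (hτ : ∀ k, Measurable (τ k)) (k : ℕ) :
    ∀ᵐ u ∂volume.restrict (Ioc 0 T), ∀ᵐ ω ∂μ,
      jumpedBefore k u (jumpHistory ι τ T k ω) * survival (τ (k + 1)) u ω =
        interJump τ k u ω := by
  filter_upwards [ae_restrict_of_ae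
    ((Measure.countable_meas_level_set_pos (μ := μ) (hτ (k + 1))).ae_notMem volume),
    ae_restrict_mem measurableSet_Ioc] with u hu huT
  have hne : ∀ᵐ ω ∂μ, τ (k + 1) ω ≠ u := by
    simpa [ae_iff] using hu
  filter_upwards [hne] with ω hω
  have hmin : min (τ k ω) T < u ↔ τ k ω < u := by
    simp [huT.2]
  have hle : u < τ (k + 1) ω ↔ u ≤ τ (k + 1) ω := ⟨le_of_lt, fun h => h.lt_of_ne' hω⟩
  by_cases hk : τ k ω < u <;> by_cases hk' : u ≤ τ (k + 1) ω <;>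
    simp [jumpedBefore, jumpHistory, survival, interJump, indicator, hmin, hle, hk, hk']

variable [MeasurableSpace E]

lemma IsJumpSequence.measurable_jumpHistory (hτ : IsJumpSequence μ F τ) (hT : 0 ≤ T)
    (hι : Measurable[F T] ι) (k : ℕ) : Measurable[jumpFilt F τ k T] (jumpHistory ι τ T k) := by
  let : MeasurableSpace Ω := jumpFilt F τ k T
  refine (hι.mono (le_sup_left.trans (sup_le_jumpFilt hτ.filtration_mono k hT)) le_rfl).prodMk
    (measurable_pi_lambda _ fun j => ?_)
  by_cases hj : j ≤ k
  · simpa only [hj, if_true] using hτ.measurable_min hT hj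
  · simp only [hj, if_false, measurable_const]

lemma measurable_jumpedBefore (k : ℕ) (u : ℝ) : Measurable (jumpedBefore (E := E) k u) :=
  (measurable_one.indicator measurableSet_Iio).comp ((measurable_pi_apply k).comp measurable_snd)

lemma isFluxWeight_jumpedBefore (hL : 0 < L) (hLU : L ≤ U) (k : ℕ) (he : Measurable (e u))
    (he_mem : ∀ y, e u y ∈ Icc L U) :
    IsFluxWeight L U (jumpedBefore (E := E) k u) fun y => jumpedBefore k u y * e u y.1 := by
  have hmeas := measurable_jumpedBefore (E := E) k u
  have hmem (y : E × (ℕ → ℝ)) : jumpedBefore k u y ∈ Icc 0 1 :=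
    ⟨indicator_nonneg (fun _ _ => zero_le_one) _, indicator_le_self' (fun _ _ => zero_le_one) _⟩
  refine ⟨hL, hLU, hmeas, hmeas.mul (he.comp measurable_fst), hmem, fun y => ?_⟩
  rw [mul_comm (jumpedBefore k u y)]
  exact ⟨mul_le_mul_of_nonneg_right (he_mem _).1 (hmem y).1,
    mul_le_mul_of_nonneg_right (he_mem _).2 (hmem y).1⟩

lemma ae_mul_flux_survivorLaw [SFinite μ] (hτ : ∀ k, Measurable (τ k)) (k : ℕ)
    (hY : Measurable (jumpHistory ι τ T k)) (he : ∀ u, Measurable (e u))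
    {Ψ : E × (ℕ → ℝ) → ℝ} (hΨ : Measurable Ψ) :
    ∀ᵐ u ∂volume.restrict (Ioc 0 T), l u k * flux (jumpedBefore k u)
      (fun y => jumpedBefore k u y * e u y.1)
        (survivorLaw μ (jumpHistory ι τ T k) (τ (k + 1)) u) Ψ =
          ∫ ω, Ψ (jumpHistory ι τ T k ω) *
            jumpIntensity μ τ (fun u ω => e u (ι ω)) l k u ω ∂μ := by
  filter_upwards [ae_ae_jumpedBefore_mul_survival (ι := ι) (T := T) (μ := μ) hτ k] with u hu
  have hr := measurable_jumpedBefore (E := E) k u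
  have hw : Measurable fun y : E × (ℕ → ℝ) => jumpedBefore k u y * e u y.1 :=
    hr.mul ((he u).comp measurable_fst)
  have hmean (Φ : E × (ℕ → ℝ) → ℝ) : ∫ ω, Φ (jumpHistory ι τ T k ω) *
      (jumpedBefore k u (jumpHistory ι τ T k ω) * e u (ι ω)) * survival (τ (k + 1)) u ω ∂μ =
        ∫ ω, Φ (jumpHistory ι τ T k ω) * (interJump τ k u ω * e u (ι ω)) ∂μ :=
    integral_congr_ae (hu.mono fun ω hω => by
      dsimp only
      rw [← hω]
      ring)
  have hone := hmean 1
  simp only [Pi.one_apply, one_mul] at hone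
  rw [flux, integral_survivorLaw hY (hτ _) u hr, integral_survivorLaw hY (hτ _) u hw,
    integral_survivorLaw hY (hτ _) u (Ψ := fun y => Ψ y * _) (hΨ.mul hw), integral_congr_ae hu]
  calc l u k * (stateProb μ τ k u / _ * _)
    _ = l u k * (stateProb μ τ k u / stateMean μ τ (fun u ω => e u (ι ω)) k u *
          ∫ ω, Ψ (jumpHistory ι τ T k ω) * (interJump τ k u ω * e u (ι ω)) ∂μ) :=
      congrArg _ (congrArg₂ _ (congrArg _ hone) (hmean Ψ))
    _ = _ := by
      rw [← mul_assoc, mul_comm, ← integral_mul_const]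
      simp only [jumpIntensity, rateFactor, mul_assoc]

lemma IsJumpSequence.isFluxEvolution [IsProbabilityMeasure μ] (hτ : IsJumpSequence μ F τ)
    (hr : IsRateData m0 F L U Λ T (fun u ω => e u (ι ω)) l)
    (hw : HasWeakJumpIntensity μ F τ T (fun u ω => e u (ι ω)) l) (hT : 0 ≤ T)
    (hι : Measurable[F T] ι) (he : ∀ u, Measurable (e u)) (k : ℕ) :
    IsFluxEvolution (jumpedBefore k) (fun u y => jumpedBefore k u y * e u y.1) (l · k) T
      (survivorLaw μ (jumpHistory ι τ T k) (τ (k + 1))) := by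
  have hle := (hτ.usualConditions_jumpFilt k).le T
  have hYT := hτ.measurable_jumpHistory hT hι k
  have hY : Measurable (jumpHistory ι τ T k) := hYT.mono hle le_rfl
  have hflux {Ψ : E × (ℕ → ℝ) → ℝ} (hΨ : Measurable Ψ) :=
    ae_mul_flux_survivorLaw (μ := μ) (l := l) hτ.measurable k hY he hΨ
  have hbdd {Ψ : E × (ℕ → ℝ) → ℝ} (hΨ : Measurable Ψ) (hΨ1 : ∀ y, |Ψ y| ≤ 1) :
      BddMeas μ (jumpFilt F τ k T) 1 fun ω => Ψ (jumpHistory ι τ T k ω) :=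
    ⟨(hΨ.comp hYT).aestronglyMeasurable, Eventually.of_forall fun ω => hΨ1 _⟩
  refine ⟨fun t => ?_, fun Ψ hΨ hΨ1 => ?_, fun Ψ hΨ hΨ1 t ht => ?_⟩
  · rw [survivorLaw_apply hY (hτ.measurable _) t .univ]
    exact prob_le_one
  · exact (integrable_integral_mul (hr.measurable_uncurry_jumpIntensity hτ.measurable k)
      (hr.abs_jumpIntensity_le hτ.measurable k) ((hbdd hΨ hΨ1).integrable hle)).congr
        ((hflux hΨ).mono fun u hu => hu.symm)
  · have hint (s : ℝ) := (bddMeas_survival (μ := μ) (t := s)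
      (hτ.measurable (k + 1) measurableSet_Iic)).integrable_mul le_rfl
        ((hbdd hΨ hΨ1).integrable hle)
    rw [integral_survivorLaw hY (hτ.measurable _) t hΨ,
      integral_survivorLaw hY (hτ.measurable _) 0 hΨ, integral_congr_ae
        (ae_restrict_of_ae_restrict_of_subset (Ioc_subset_Ioc_right ht.2) (hflux hΨ)),
      ← hw k _ (hbdd hΨ hΨ1) t ht]
    simp only [mul_sub]
    rw [integral_sub (hint 0) (hint t), sub_sub_cancel]

lemma map_jumpHistory_zero (hτ : ∀ᵐ ω ∂μ, τ 0 ω = 0) (hτ' : ∀ᵐ ω ∂μ, τ' 0 ω = 0) :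
    μ.map (jumpHistory ι τ T 0) = μ.map (jumpHistory ι τ' T 0) := by
  refine Measure.map_congr ?_
  filter_upwards [hτ, hτ'] with ω hω hω'
  refine Prod.ext rfl (funext fun j => ?_)
  rcases eq_or_ne j 0 with rfl | hj
  · simp [jumpHistory, hω, hω']
  · simp [jumpHistory, hj]

theorem IsJumpSequence.map_jumpHistory_eq [IsProbabilityMeasure μ] (hτ : IsJumpSequence μ F τ)
    (hτ' : IsJumpSequence μ F τ') (hr : IsRateData m0 F L U Λ T (fun u ω => e u (ι ω)) l)
    (hw : HasWeakJumpIntensity μ F τ T (fun u ω => e u (ι ω)) l)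
    (hw' : HasWeakJumpIntensity μ F τ' T (fun u ω => e u (ι ω)) l) (hT : 0 ≤ T)
    (hι : Measurable[F T] ι) (hLU : L ≤ U) (he : ∀ u, Measurable (e u))
    (he_mem : ∀ u y, e u y ∈ Icc L U) (k : ℕ) :
    μ.map (jumpHistory ι τ T k) = μ.map (jumpHistory ι τ' T k) := by
  induction k with
  | zero =>
    exact map_jumpHistory_zero (hτ.ae_isJumpPath.mono fun ω hω => hω.zero)
      (hτ'.ae_isJumpPath.mono fun ω hω => hω.zero)
  | succ k ih =>
    have hY : Measurable (jumpHistory ι τ T k) := (hτ.measurable_jumpHistory hT hι k).mono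
      ((hτ.usualConditions_jumpFilt k).le T) le_rfl
    have hY' : Measurable (jumpHistory ι τ' T k) := (hτ'.measurable_jumpHistory hT hι k).mono
      ((hτ'.usualConditions_jumpFilt k).le T) le_rfl
    have hsurv : ∀ t ∈ Icc 0 T, survivorLaw μ (jumpHistory ι τ T k) (τ (k + 1)) t =
        survivorLaw μ (jumpHistory ι τ' T k) (τ' (k + 1)) t := fun t ht =>
      (hτ.isFluxEvolution hr hw hT hι he k).eq_of_eq_zero (hτ'.isFluxEvolution hr hw' hT hι he k)
        (fun u => isFluxWeight_jumpedBefore hr.L_pos hLU k (he u) (he_mem u))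
        (fun u => hr.rate_mem_Icc u k)
        (by rw [survivorLaw_zero (hτ.ae_pos k), survivorLaw_zero (hτ'.ae_pos k), ih]) ht
    have happend : Measurable fun p : (E × (ℕ → ℝ)) × ℝ =>
        (p.1.1, Function.update p.1.2 (k + 1) p.2) :=
      (measurable_fst.comp measurable_fst).prodMk
        (measurable_update'.comp ((measurable_snd.comp measurable_fst).prodMk measurable_snd))
    rw [jumpHistory_succ, jumpHistory_succ,
      ← Measure.map_map happend (hY.prodMk ((hτ.measurable _).min measurable_const)),
      ← Measure.map_map happend (hY'.prodMk ((hτ'.measurable _).min measurable_const)),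
      map_prodMk_min_eq_of_survivorLaw_eq hT hY hY' (hτ.measurable _) (hτ'.measurable _)
        (hτ.ae_pos k) (hτ'.ae_pos k) hsurv]

end JumpHistory

section FiniteDimensional

variable {m0 : MeasurableSpace Ω} {E : Type*} {μ : Measure Ω} {F : ℝ → MeasurableSpace Ω}
  {τ τ' : ℕ → Ω → ℝ} {ι : Ω → E} {T : ℝ} {J : Type*} {t : J → ℝ}

/-- The number of jumps up to the times `t i` read off from a history, where at most `k` jumps are
taken into account. -/
def historyCount (k : ℕ) (t : J → ℝ) (y : E × (ℕ → ℝ)) (i : J) : ℝ :=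
  ∑ j ∈ Finset.range k, (Iic (t i)).indicator 1 (y.2 (j + 1))

lemma IsJumpPath.historyCount_jumpHistory {ω : Ω} (h : IsJumpPath τ ω) (ht : ∀ i, 0 ≤ t i)
    (htT : ∀ i, t i < T) {k : ℕ} (hk : ∀ i, countX τ (t i) ω ≤ k) :
    historyCount k t (jumpHistory ι τ T k ω) = fun i => (countX τ (t i) ω : ℝ) := by
  ext i
  have hterm : ∀ j ∈ Finset.range k,
      (Iic (t i)).indicator (1 : ℝ → ℝ) ((jumpHistory ι τ T k ω).2 (j + 1)) =
        if j < countX τ (t i) ω then 1 else 0 := fun j hj => by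
    have hle : min (τ (j + 1) ω) T ≤ t i ↔ j < countX τ (t i) ω := by
      rw [min_le_iff, or_iff_left (htT i).not_ge, ← h.le_countX_iff (ht i), Nat.succ_le_iff]
    simp only [jumpHistory, Finset.mem_range.1 hj, Nat.succ_le_iff, if_true, indicator_apply,
      mem_Iic, hle, Pi.one_apply]
  have hfilter : (Finset.range k).filter (· < countX τ (t i) ω) =
      Finset.range (countX τ (t i) ω) := by
    ext j
    simp only [Finset.mem_filter, Finset.mem_range]
    exact and_iff_right_of_imp fun hj => hj.trans_le (hk i)
  rw [historyCount, Finset.sum_congr rfl hterm, Finset.sum_boole, hfilter, Finset.card_range]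

lemma IsJumpSequence.measurable_countX_pi (hτ : IsJumpSequence μ F τ) (ht : ∀ i, 0 ≤ t i) :
    Measurable fun ω i => (countX τ (t i) ω : ℝ) :=
  measurable_pi_lambda _ fun i => measurable_from_top.comp (hτ.measurable_countX (ht i))

variable [MeasurableSpace E]

lemma measurable_historyCount (k : ℕ) (t : J → ℝ) : Measurable (historyCount (E := E) k t) :=
  measurable_pi_lambda _ fun _ => Finset.measurable_sum _ fun j _ =>
    (measurable_one.indicator measurableSet_Iic).comp
      ((measurable_pi_apply (j + 1)).comp measurable_snd)

lemma IsJumpSequence.tendsto_map_jumpHistory [IsFiniteMeasure μ] [Finite J]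
    (hτ : IsJumpSequence μ F τ) (ht : ∀ i, 0 ≤ t i) (htT : ∀ i, t i < T)
    (hY : ∀ k, Measurable (jumpHistory ι τ T k)) {S : Set (J → ℝ)} (hS : MeasurableSet S) :
    Tendsto (fun k => μ.map (jumpHistory ι τ T k) (historyCount k t ⁻¹' S)) atTop
      (𝓝 (μ.map (fun ω i => (countX τ (t i) ω : ℝ)) S)) := by
  have hcount := hτ.measurable_countX_pi ht
  have hpre (k : ℕ) : MeasurableSet (historyCount (E := E) k t ⁻¹' S) :=
    measurable_historyCount k t hS
  simp only [Measure.map_apply (hY _) (hpre _), Measure.map_apply hcount hS]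
  refine tendsto_measure_of_ae_tendsto_indicator_of_isFiniteMeasure atTop (hcount hS)
    (fun k => hY k (hpre k)) ?_
  filter_upwards [hτ.ae_isJumpPath] with ω hω
  filter_upwards [eventually_all.2 fun i => eventually_ge_atTop (countX τ (t i) ω)] with k hk
  simp only [mem_preimage, hω.historyCount_jumpHistory ht htT hk]

lemma IsJumpSequence.map_countX_eq [IsFiniteMeasure μ] [Finite J] (hτ : IsJumpSequence μ F τ)
    (hτ' : IsJumpSequence μ F τ') (ht : ∀ i, 0 ≤ t i) (htT : ∀ i, t i < T) (hT : 0 ≤ T)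
    (hι : Measurable[F T] ι)
    (hlaw : ∀ k, μ.map (jumpHistory ι τ T k) = μ.map (jumpHistory ι τ' T k)) :
    μ.map (fun ω i => (countX τ (t i) ω : ℝ)) = μ.map fun ω i => (countX τ' (t i) ω : ℝ) := by
  refine Measure.ext fun S hS => ?_
  have hlim := hτ.tendsto_map_jumpHistory ht htT (fun k => (hτ.measurable_jumpHistory hT hι k).mono
    ((hτ.usualConditions_jumpFilt k).le T) le_rfl) hS
  have hlim' := hτ'.tendsto_map_jumpHistory ht htT (fun k =>
    (hτ'.measurable_jumpHistory hT hι k).mono ((hτ'.usualConditions_jumpFilt k).le T) le_rfl) hS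
  simp only [hlaw] at hlim
  exact tendsto_nhds_unique hlim hlim'

end FiniteDimensional

theorem inversion_unique_in_law_general {m0 : MeasurableSpace Ω} (μ : Measure Ω)
    [IsProbabilityMeasure μ] (F : ℝ → MeasurableSpace Ω) (hF : IsFiltration m0 F)
    (hnull : ∀ s : Set Ω, μ s = 0 → MeasurableSet[F 0] s) (L U : ℝ) (hL : 0 < L)
    (η : ℝ → Ω → ℝ) (hη_prog : ProgMeas F η)
    (hη_bdd : ∀ᵐ p ∂μ.prod (volume.restrict (Ici (0 : ℝ))), L ≤ η p.2 p.1 ∧ η p.2 p.1 ≤ U)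
    (Λ : ℝ) (lam : ℝ → ℕ → ℝ) (hlam_meas : ∀ x, Measurable fun t => lam t x)
    (hlam_bdd : ∀ x, ∀ᵐ t ∂volume.restrict (Ici (0 : ℝ)), 0 ≤ lam t x ∧ lam t x ≤ Λ)
    (τ τ' : ℕ → Ω → ℝ) (h : InversionSetting μ F η lam τ) (h' : InversionSetting μ F η lam τ')
    {J : Type*} [Finite J] (t : J → ℝ) (ht : ∀ i, 0 ≤ t i) :
    μ.map (fun ω i => (countX τ (t i) ω : ℝ)) = μ.map fun ω i => (countX τ' (t i) ω : ℝ) := by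
  have : NeZero (volume.restrict (Ici (0 : ℝ))) := ⟨by simp⟩
  have hLU : L ≤ U := by
    obtain ⟨ω, hω⟩ := (Measure.ae_ae_of_ae_prod hη_bdd).exists
    obtain ⟨s, hs⟩ := hω.exists
    exact hs.1.trans hs.2
  have hΛ : 0 ≤ Λ := (hlam_bdd 0).exists.elim fun _ hs => hs.1.trans hs.2
  obtain ⟨S, hS⟩ := (finite_range t).bddAbove
  have hT : 0 ≤ max S 0 + 1 := by positivity
  have htT (i : J) : t i < max S 0 + 1 :=
    ((hS (mem_range_self i)).trans (le_max_left _ _)).trans_lt (lt_add_one _)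
  have hτ := h.isJumpSequence hF.1 hnull
  have hτ' := h'.isJumpSequence hF.1 hnull
  have hr := hη_prog.isRateData_clamped (hLU := hLU) (hT := hT) (hΛ := hΛ) hF hL hlam_meas
  have hη := ae_ae_eq_clampedProcess (hLU := hLU) (hT := hT) hη_bdd
  have hl := ae_eq_clampedRate (hΛ := hΛ) (T := max S 0 + 1) hlam_bdd
  have he := hη_prog.measurable_uncurry_clampedProcess (hLU := hLU) (hT := hT)
  let : MeasurableSpace Ω := F (max S 0 + 1)
  exact hτ.map_countX_eq hτ' ht htT hT measurable_id fun k =>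
    hτ.map_jumpHistory_eq (ι := id) hτ' hr (hτ.hasWeakJumpIntensity h hr hη.1 hη.2 hl)
      (hτ'.hasWeakJumpIntensity h' hr hη.1 hη.2 hl) hT measurable_id hLU
      (fun _ => he.comp measurable_prodMk_left) hr.mem_Icc k

/-- Uniqueness in law of the inverted Markovian projection within the class
of Cox-type counting processes: two counting processes satisfying the conditions of the
uniqueness theorem have the same finite-dimensional distributions. -/
theorem inversion_unique_in_law
    {m0 : MeasurableSpace Ω} (μ : Measure Ω) [IsProbabilityMeasure μ]
    (F : ℝ → MeasurableSpace Ω) (hUC : UsualConditions μ F)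
    (L U : ℝ) (hL : 0 < L) (hLU : L < U)
    (η : ℝ → Ω → ℝ) (hη_prog : ProgMeas F η)
    (hη_bdd : ∀ᵐ p ∂(μ.prod (volume.restrict (Set.Ici (0:ℝ)))),
      L ≤ η p.2 p.1 ∧ η p.2 p.1 ≤ U)
    (lam : ℝ → ℕ → ℝ) (hlam_meas : ∀ x : ℕ, Measurable (fun t => lam t x))
    (hlam_bdd : ∀ x : ℕ, ∀ᵐ t ∂(volume.restrict (Set.Ici (0:ℝ))),
      L ≤ lam t x ∧ lam t x ≤ U)
    (τ τ' : ℕ → Ω → ℝ)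
    (h1 : InversionSetting μ F η lam τ)
    (h2 : InversionSetting μ F η lam τ') :
    ∀ (n : ℕ) (t : Fin (n + 1) → ℝ), (∀ i, 0 ≤ t i) → StrictMono t →
      Measure.map (fun ω (i : Fin (n + 1)) => (countX τ (t i) ω : ℝ)) μ =
      Measure.map (fun ω (i : Fin (n + 1)) => (countX τ' (t i) ω : ℝ)) μ := by
  exact fun n t ht _ => inversion_unique_in_law_general μ F hUC.1 hUC.2.2 L U hL η hη_prog hη_bdd U
    lam hlam_meas (fun x => (hlam_bdd x).mono fun s hs => ⟨hL.le.trans hs.1, hs.2⟩) τ τ' h1 h2 t ht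

end InvMarkovJump
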